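/- Let n ≥ 2 be an integer and F_q a finite field of order q such that q is coprime to n(n-1) and q ≥ (6·n!)². Then there exists t ∈ F_q such that the trinomial Y^n - Y^{n-1} - t is irreducible in F_q[Y] (hence the extension F_{q^n}/F_q is realized by this trinomial). -/

import Mathlib

/-!
Write `f = X ^ n - X ^ (n - 1)`. The proof is a Stepanov-type argument on the Galois closure of
the covering `y ↦ f y` of the line, in the form given to it by Bombieri, with all functions written
as polynomials in the `n` roots of `f = τ`.

Suppose `f - t` is reducible for every `t` in `F`, and let `q` be the order of `F`. Outside the two
branch values `0` and `tc`, the Frobenius permutes the `n` distinct roots of `f - t`, and it is never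
an `n`-cycle (`exists_frobenius_perm`). So it always lies in a set `A` of only `n! - (n - 1)!`
permutations. Consider an auxiliary function `Ψ = ∑ c i j * s i * (s j) ^ q`, where the `s i` and
`s j` run over two ranges of staircase monomials in the roots. Modulo `h ^ q`, with `h` a local parameter at an ordering of the
roots whose Frobenius is `σ`, the factor `(s j) ^ q` equals the value there of `s j` with its
variables permuted by `σ`. Hence vanishing of `Ψ` to order `n ^ 2` at all such points, for all
`σ ∈ A`, is a system of linear equations in the `c i j` which does not depend on the point
(`X_pow_dvd_aeval_flow`), and since `A` misses a proportion `1 / n` of all permutations there are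
more unknowns than equations (`IsBasePoint.exists_coefficients`, `count_params`).

The function `Ψ` is not identically zero (`IsBasePoint.aux_ne_zero`): the `s i` have degree too
small to vanish to order `q`, so the `q`-th powers can be separated off, and the staircase monomials
are linearly independent on the curve (`IsBasePoint.stair_independent`). The product of `Ψ` over
all orderings of the roots is a polynomial `N` in `τ` of degree at most `(n - 1)!` times the degree
of `Ψ` (`exists_norm`). It is nonzero, yet has a zero of order at least `n ^ 2 * n!` at each of the
`q - 2` or more unbranched points of `F` (`multiplicity_norm`), which is too many.

All of this needs the curve of orderings of the roots to be irreducible, that is, the monodromy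
group to be the full symmetric group (`IsBasePoint.monodromy`). That group contains a transposition,
because `f` has a single, nondegenerate critical point `yc ≠ 0`, and it is doubly transitive,
because a pair of distinct roots is rationally parametrised by its quotient. Concretely, identities
between functions on the curve are tested on one explicit tuple of power series over the critical
value `tc` (`IsBasePoint`); a polynomial of degree `D` in the roots that vanishes there to order more
than `(n - 1)! * D` is zero on the curve (`IsBasePoint.eq_zero_of_X_pow_dvd`), and whatever is zero
there is zero on every fibre (`IsBasePoint.aeval_eq_zero`).
-/

open Polynomial

/-! ### Norms over the orderings of the roots -/

/-- The entries of `w`, with multiplicity, are the roots of `X ^ n - X ^ (n - 1) - τ`. Stated as a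
factorization, so that it makes sense over every commutative ring and is stable under ring maps. -/
def RootTuple {C : Type*} [CommRing C] {n : ℕ} (w : Fin n → C) (τ : C) : Prop :=
  ∏ i, (X - Polynomial.C (w i)) = X ^ n - X ^ (n - 1) - Polynomial.C τ

/-- A polynomial expression `P` in the elementary symmetric polynomials `e_1, …, e_n` which has
degree at most `D` in the variables involves only monomials of weight at most `D`, where `e_i` has weight
`i`: weighted components of `P` go to homogeneous components, and the `e_i` are algebraically
independent. -/
theorem weight_le_of_aeval_esymm {k : Type*} [CommRing k] {n D : ℕ}
    (P : MvPolynomial (Fin n) k)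
    (hD : (MvPolynomial.aeval (fun i : Fin n => MvPolynomial.esymm (Fin n) k (i + 1)) P).totalDegree
      ≤ D) (d : Fin n →₀ ℕ) (hd : d ∈ P.support) :
    Finsupp.weight (fun i : Fin n => (i : ℕ) + 1) d ≤ D := by
  classical
  set e : MvPolynomial (Fin n) k →ₐ[k] MvPolynomial (Fin n) k :=
    MvPolynomial.aeval (fun i : Fin n => MvPolynomial.esymm (Fin n) k (i + 1)) with he
  set w : Fin n → ℕ := fun i => (i : ℕ) + 1 with hw
  have hinj : Function.Injective e := by
    intro p q hpq
    apply MvPolynomial.esymmAlgHom_injective k (σ := Fin n) (n := n) (by simp)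
    apply Subtype.ext
    rw [MvPolynomial.esymmAlgHom_apply, MvPolynomial.esymmAlgHom_apply]
    exact hpq
  have hmon : ∀ (d : Fin n →₀ ℕ) (c : k),
      (e (MvPolynomial.monomial d c)).IsHomogeneous (Finsupp.weight w d) := by
    intro d c
    rw [he, MvPolynomial.aeval_monomial, Finsupp.weight_apply, Finsupp.prod, Finsupp.sum]
    rw [MvPolynomial.algebraMap_eq, ← zero_add (∑ a ∈ d.support, _)]
    refine (MvPolynomial.isHomogeneous_C _ c).mul ?_
    refine MvPolynomial.IsHomogeneous.prod _ _ _ fun i _ => ?_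
    simp only [smul_eq_mul, hw]
    rw [mul_comm]
    refine MvPolynomial.IsHomogeneous.pow ?_ _
    rw [MvPolynomial.esymm]
    refine MvPolynomial.IsHomogeneous.sum _ _ _ fun t ht => ?_
    have := MvPolynomial.IsHomogeneous.prod t (fun i => (MvPolynomial.X i : MvPolynomial (Fin n) k))
      (fun _ => 1) fun i _ => MvPolynomial.isHomogeneous_X k i
    rwa [Finset.sum_const, (Finset.mem_powersetCard.1 ht).2, smul_eq_mul, mul_one] at this
  have hhom : ∀ m, (e (MvPolynomial.weightedHomogeneousComponent w m P)).IsHomogeneous m := by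
    intro m
    rw [MvPolynomial.weightedHomogeneousComponent_apply, map_sum]
    refine MvPolynomial.IsHomogeneous.sum _ _ _ fun d hd => ?_
    obtain ⟨_, rfl⟩ := Finset.mem_filter.1 hd
    exact hmon _ _
  have hcomp : ∀ m, MvPolynomial.homogeneousComponent m (e P) =
      e (MvPolynomial.weightedHomogeneousComponent w m P) := by
    intro m
    have h1 : P = ∑ d ∈ P.support, MvPolynomial.monomial d (P.coeff d) := P.as_sum
    rw [MvPolynomial.weightedHomogeneousComponent_apply, map_sum]
    conv_lhs => rw [h1, map_sum, map_sum]
    rw [Finset.sum_filter]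
    refine Finset.sum_congr rfl fun d _ => ?_
    rw [MvPolynomial.homogeneousComponent_of_mem (hmon d _)]
    simp only [eq_comm]
  by_contra hlt
  push Not at hlt
  have h0 : MvPolynomial.weightedHomogeneousComponent w (Finsupp.weight w d) P = 0 := by
    apply hinj
    rw [← hcomp, map_zero]
    exact MvPolynomial.homogeneousComponent_eq_zero _ _ (lt_of_le_of_lt hD hlt)
  have := congrArg (MvPolynomial.coeff d) h0
  rw [MvPolynomial.coeff_weightedHomogeneousComponent, if_pos rfl] at this
  exact MvPolynomial.mem_support_iff.1 hd (by simpa using this)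

theorem RootTuple.aeval_esymm {k C : Type*} [CommRing k] [CommRing C] [Algebra k C] {n : ℕ}
    (hn : 2 ≤ n) {w : Fin n → C} {τ : C} (h : RootTuple w τ) (i : Fin n) :
    MvPolynomial.aeval w (MvPolynomial.esymm (Fin n) k (i + 1)) =
      if (i : ℕ) + 1 = n then (-1) ^ (n + 1) * τ else if (i : ℕ) = 0 then 1 else 0 := by
  rw [MvPolynomial.aeval_esymm_eq_multiset_esymm]
  have hc : Multiset.card (Multiset.map w Finset.univ.val) = n := by simp
  have hi := i.2
  have key := Multiset.prod_X_sub_C_coeff (Multiset.map w Finset.univ.val)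
    (k := n - (i + 1)) (by rw [hc]; omega)
  rw [hc, Multiset.map_map] at key
  have hp : (Multiset.map ((fun t => X - Polynomial.C t) ∘ w) Finset.univ.val).prod
      = X ^ n - X ^ (n - 1) - Polynomial.C τ := h
  have e1 : n - (n - ((i : ℕ) + 1)) = i + 1 := by omega
  rw [hp, e1] at key
  have hs : (-1 : C) ^ ((i : ℕ) + 1) * (-1) ^ ((i : ℕ) + 1) = 1 := by
    rw [← mul_pow]; simp
  have key2 : (Multiset.map w Finset.univ.val).esymm (i + 1) =
      (-1) ^ ((i : ℕ) + 1) * (X ^ n - X ^ (n - 1) - Polynomial.C τ).coeff (n - (i + 1)) := by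
    rw [key, ← mul_assoc, hs, one_mul]
  rw [key2]
  simp only [coeff_sub, coeff_X_pow, coeff_C]
  by_cases h1 : (i : ℕ) + 1 = n
  · rw [if_pos h1, if_neg (by omega), if_neg (by omega), if_pos (by omega), h1]
    ring
  · rw [if_neg h1, if_neg (by omega), if_neg (show ¬ n - ((i : ℕ) + 1) = 0 by omega)]
    by_cases h2 : (i : ℕ) = 0
    · rw [if_pos h2, if_pos (by omega), h2]
      ring
    · rw [if_neg h2, if_neg (by omega)]
      ring

/-- The product of `S` over all orderings of the roots is a polynomial `N` in `τ`, of degree at most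
`(n - 1)! * D`. Being symmetric of degree at most `n! * D`, the product is a polynomial in the `e_i`
of weight at most `n! * D`; on the roots, `e_n = ± τ` is the only nonconstant one, and it has weight
`n`. The same `N` serves for all `k`-algebras, in particular those with nilpotents. -/
theorem exists_norm.{u} {k : Type u} [CommRing k] {n : ℕ} (hn : 2 ≤ n)
    (S : MvPolynomial (Fin n) k) {D : ℕ} (hS : S.totalDegree ≤ D) :
    ∃ N : k[X], N.natDegree ≤ (n - 1).factorial * D ∧
      ∀ (C : Type u) [CommRing C] [Algebra k C] (w : Fin n → C) (τ : C), RootTuple w τ →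
        ∏ σ : Equiv.Perm (Fin n), MvPolynomial.aeval (w ∘ σ) S = aeval τ N := by
  classical
  set Q : MvPolynomial (Fin n) k := ∏ σ : Equiv.Perm (Fin n), MvPolynomial.rename σ S with hQ
  have hsym : Q.IsSymmetric := by
    intro π
    rw [hQ, map_prod]
    refine Fintype.prod_equiv (Equiv.mulLeft π) _ _ fun σ => ?_
    rw [MvPolynomial.rename_rename]
    rfl
  have hdeg : Q.totalDegree ≤ n.factorial * D := by
    refine (MvPolynomial.totalDegree_finsetProd _ _).trans ?_
    refine (Finset.sum_le_card_nsmul _ _ D fun σ _ => ?_).trans ?_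
    · exact (MvPolynomial.totalDegree_rename_le _ _).trans hS
    · simp [Fintype.card_perm]
  obtain ⟨P, hP⟩ := MvPolynomial.esymmAlgHom_surjective (σ := Fin n) (n := n) k (by simp)
    ⟨Q, hsym⟩
  have hP' : MvPolynomial.aeval (fun i : Fin n => MvPolynomial.esymm (Fin n) k (i + 1)) P = Q := by
    rw [← MvPolynomial.esymmAlgHom_apply, hP]
  have hw := weight_le_of_aeval_esymm P (D := n.factorial * D) (by rw [hP']; exact hdeg)
  set g : Fin n → k[X] := fun i => if (i : ℕ) + 1 = n then (-1) ^ (n + 1) * X else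
    if (i : ℕ) = 0 then 1 else 0 with hg
  refine ⟨MvPolynomial.aeval g P, ?_, ?_⟩
  · rw [MvPolynomial.aeval_def, MvPolynomial.eval₂_eq']
    refine natDegree_sum_le_of_forall_le _ _ fun d hd => ?_
    have hlast : n - 1 < n := by omega
    have h1 : (∏ i, g i ^ d i).natDegree ≤ d ⟨n - 1, hlast⟩ := by
      refine (natDegree_prod_le _ _).trans ?_
      rw [Finset.sum_eq_single ⟨n - 1, hlast⟩]
      · refine natDegree_pow_le.trans ?_
        have : (g ⟨n - 1, hlast⟩).natDegree ≤ 1 := by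
          simp only [hg]
          rw [if_pos (by omega)]
          have : ((-1 : k[X]) ^ (n + 1) * X) = Polynomial.C ((-1) ^ (n + 1)) * X := by simp
          rw [this]
          exact (natDegree_C_mul_le _ _).trans natDegree_X_le
        nlinarith
      · intro i _ hi
        have hi' : (i : ℕ) + 1 ≠ n := fun h => hi (Fin.ext (by simp; omega))
        simp only [hg]
        rw [if_neg hi']
        split_ifs
        · simp
        · rcases Nat.eq_zero_or_pos (d i) with h | h
          · simp [h]
          · simp [zero_pow h.ne']
      · simp
    have h2 : n * d ⟨n - 1, hlast⟩ ≤ n.factorial * D := by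
      refine le_trans ?_ (hw d hd)
      rw [Finsupp.weight_apply, Finsupp.sum_fintype _ _ (by simp)]
      refine le_trans (le_of_eq ?_) (Finset.single_le_sum (fun i _ => Nat.zero_le _)
        (Finset.mem_univ (⟨n - 1, hlast⟩ : Fin n)))
      simp only [smul_eq_mul]
      rw [mul_comm]; congr 1; omega
    have h3 : n.factorial = n * (n - 1).factorial := (Nat.mul_factorial_pred (by omega)).symm
    rw [h3, mul_assoc] at h2
    have h4 := Nat.le_of_mul_le_mul_left h2 (by omega)
    rw [Polynomial.algebraMap_eq]
    exact (natDegree_C_mul_le _ _).trans (h1.trans h4)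
  · intro C _ _ w τ hwτ
    have e1 : ∏ σ : Equiv.Perm (Fin n), MvPolynomial.aeval (w ∘ σ) S = MvPolynomial.aeval w Q := by
      rw [hQ, map_prod]
      simp only [MvPolynomial.aeval_rename]
    rw [e1, ← hP', ← AlgHom.comp_apply, ← AlgHom.comp_apply]
    congr 1
    ext i
    simp only [AlgHom.comp_apply, MvPolynomial.aeval_X]
    rw [hwτ.aeval_esymm hn]
    simp only [hg]
    split_ifs <;> simp

/-! ### A base point over the critical value -/

theorem rootPoly_monic {C : Type*} [CommRing C] [Nontrivial C] {n : ℕ} (hn : 2 ≤ n) (τ : C) :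
    (X ^ n - X ^ (n - 1) - Polynomial.C τ).Monic ∧
      (X ^ n - X ^ (n - 1) - Polynomial.C τ).natDegree = n := by
  have h : (X ^ n - X ^ (n - 1) - Polynomial.C τ) = X ^ n - (X ^ (n - 1) + Polynomial.C τ) := by ring
  have hd : (X ^ (n - 1) + Polynomial.C τ).degree < (n : WithBot ℕ) := by
    refine (degree_add_le _ _).trans_lt (max_lt ?_ ?_)
    · rw [degree_X_pow]; exact_mod_cast (by omega : n - 1 < n)
    · exact degree_C_le.trans_lt (by exact_mod_cast (by omega : 0 < n))
  rw [h]
  refine ⟨monic_X_pow_sub hd, ?_⟩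
  have := degree_sub_eq_left_of_degree_lt (p := (X ^ n : C[X]))
    (q := X ^ (n - 1) + Polynomial.C τ) (by rw [degree_X_pow]; exact hd)
  exact natDegree_eq_of_degree_eq_some (by rw [this, degree_X_pow])

theorem rootTuple_of_dvd {C : Type*} [CommRing C] [Nontrivial C] {n : ℕ} (hn : 2 ≤ n)
    {w : Fin n → C} {τ : C}
    (h : ∏ i, (X - Polynomial.C (w i)) ∣ X ^ n - X ^ (n - 1) - Polynomial.C τ) :
    RootTuple w τ := by
  refine (eq_of_monic_of_dvd_of_natDegree_le (monic_prod_of_monic _ _ fun i _ => monic_X_sub_C _)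
    (rootPoly_monic hn τ).1 h ?_).symm
  rw [(rootPoly_monic hn τ).2, natDegree_prod_of_monic _ _ fun i _ => monic_X_sub_C _]
  simp

theorem rootTuple_of_injective {C : Type*} [CommRing C] [IsDomain C] {n : ℕ} (hn : 2 ≤ n)
    {w : Fin n → C} {τ : C} (hw : Function.Injective w)
    (h : ∀ i, w i ^ n - w i ^ (n - 1) = τ) : RootTuple w τ := by
  have h0 := (rootPoly_monic hn τ).1.ne_zero
  refine rootTuple_of_dvd hn ?_
  have := (Multiset.prod_X_sub_C_dvd_iff_le_roots h0 (Finset.univ.val.map w)).2 (by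
    rw [Multiset.le_iff_subset (Finset.univ.nodup.map hw)]
    intro x hx
    obtain ⟨i, _, rfl⟩ := Multiset.mem_map.1 hx
    rw [mem_roots h0]
    simp [IsRoot, ← h i])
  rwa [Multiset.map_map] at this

theorem RootTuple.pow_eq {C : Type*} [CommRing C] {n : ℕ}
    {w : Fin n → C} {τ : C} (h : RootTuple w τ) (i : Fin n) : w i ^ n - w i ^ (n - 1) = τ := by
  have := congrArg (eval (w i)) h
  rw [eval_prod, Finset.prod_eq_zero (Finset.mem_univ i) (by simp)] at this
  simp only [eval_sub, eval_pow, eval_X, eval_C] at this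
  exact (sub_eq_zero.1 this.symm)

/-- Hensel lifting of a simple root from `k` to `k⟦X⟧`. -/
theorem powerSeries_hensel {k : Type*} [Field k] (Q : (PowerSeries k)[X]) (hQ : Q.Monic) (r : k)
    (h : (Q.map PowerSeries.constantCoeff).eval r = 0)
    (h' : (Q.map PowerSeries.constantCoeff).derivative.eval r ≠ 0) :
    ∃ x : PowerSeries k, Q.eval x = 0 ∧ PowerSeries.constantCoeff x = r := by
  have hc : ∀ P : (PowerSeries k)[X], PowerSeries.constantCoeff (P.eval (PowerSeries.C r)) =
      (P.map PowerSeries.constantCoeff).eval r := by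
    intro P
    rw [eval_map, ← eval₂_id, hom_eval₂]
    simp
  have : HenselianRing (PowerSeries k) (Ideal.span {PowerSeries.X}) := inferInstance
  obtain ⟨x, hx, hxr⟩ := HenselianRing.is_henselian (I := Ideal.span {(PowerSeries.X : PowerSeries k)})
    Q hQ (PowerSeries.C r)
    (by rw [Ideal.mem_span_singleton, PowerSeries.X_dvd_iff, hc, h])
    (by
      apply IsUnit.map
      rw [PowerSeries.isUnit_iff_constantCoeff, hc, ← derivative_map]
      exact h'.isUnit)
  refine ⟨x, hx, ?_⟩
  rw [Ideal.mem_span_singleton, PowerSeries.X_dvd_iff, map_sub, sub_eq_zero] at hxr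
  simpa using hxr

/-- A tuple of power series `y` listing the distinct roots of `f = tc + X ^ 2`, such that the
substitution `X ↦ -X` interchanges the branches `a` and `b` and fixes the others. This is the local
picture of the Galois closure over a simple critical value `tc`, with `X` a local parameter. -/
structure IsBasePoint {k : Type*} [Field k] {n : ℕ} (y : Fin n → PowerSeries k) (tc : k)
    (a b : Fin n) : Prop where
  ne : a ≠ b
  inj : Function.Injective y
  root : RootTuple y (PowerSeries.C tc + PowerSeries.X ^ 2)
  neg : ∀ i, PowerSeries.evalNegHom (y i) = y (Equiv.swap a b i)

/-- If `P` has a double zero at the origin, then `P(W) = X ^ 2` has a solution with a simple zero.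
Substituting `W = X / x` and clearing denominators turns this into a monic equation for the unit `x`,
to which the lemma of Hensel applies. -/
theorem exists_ramified_branch {k : Type*} [Field k] [IsAlgClosed k] (h2 : (2 : k) ≠ 0) (P : k[X]) (n : ℕ)
    (hn : 2 ≤ n) (hP : P.natDegree ≤ n) (h0 : P.coeff 0 = 0) (h1 : P.coeff 1 = 0)
    (hc : P.coeff 2 ≠ 0) :
    ∃ W : PowerSeries k, aeval W P = PowerSeries.X ^ 2 ∧ PowerSeries.constantCoeff W = 0 ∧
      PowerSeries.coeff 1 W ≠ 0 := by
  obtain ⟨ρ, hρ⟩ := IsAlgClosed.exists_pow_nat_eq (P.coeff 2) (n := 2) (by norm_num)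
  have hρ0 : ρ ≠ 0 := by rintro rfl; exact hc (by rw [← hρ]; simp)
  set Q : (PowerSeries k)[X] := X ^ n - ∑ j ∈ Finset.range (n - 1),
    C (PowerSeries.C (P.coeff (j + 2)) * PowerSeries.X ^ j) * X ^ (n - 2 - j) with hQ
  have hQm : Q.Monic := by
    refine monic_X_pow_sub ?_
    refine (degree_sum_le _ _).trans_lt ?_
    rw [Finset.sup_lt_iff (by exact WithBot.bot_lt_coe n)]
    intro j _
    refine (degree_C_mul_X_pow_le _ _).trans_lt ?_
    exact_mod_cast (by omega : n - 2 - j < n)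
  have hQmap : Q.map PowerSeries.constantCoeff = X ^ n - C (P.coeff 2) * X ^ (n - 2) := by
    rw [hQ, Polynomial.map_sub, Polynomial.map_sum, Polynomial.map_pow, map_X]
    rw [Finset.sum_eq_single 0]
    · simp
    · intro j _ hj
      simp [hj]
    · intro h; exact absurd (Finset.mem_range.2 (by omega)) h
  obtain ⟨x, hx, hxr⟩ := powerSeries_hensel Q hQm ρ
    (by
      rw [hQmap]; simp only [eval_sub, eval_pow, eval_X, eval_mul, eval_C]
      rw [← hρ, ← pow_add]; rw [show 2 + (n - 2) = n by omega]; ring)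
    (by
      rw [hQmap]
      simp only [derivative_sub, derivative_X_pow, derivative_C_mul, eval_sub, eval_pow, eval_X,
        eval_mul, eval_C]
      intro h
      have e : (2 : k) * ρ ^ n = ρ * ((n : k) * ρ ^ (n - 1) -
          P.coeff 2 * ((n - 2 : ℕ) * ρ ^ (n - 2 - 1))) := by
        obtain ⟨m, rfl⟩ : ∃ m, n = m + 2 := ⟨n - 2, by omega⟩
        rw [← hρ]
        rcases m with _ | m
        · simp; ring
        · simp only [show m + 1 + 2 - 1 = m + 2 by omega, show m + 1 + 2 - 2 = m + 1 by omega,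
            show m + 1 - 1 = m by omega]
          push_cast; ring
      rw [h, mul_zero] at e
      exact (mul_ne_zero h2 (pow_ne_zero _ hρ0)) e)
  have hxu : IsUnit x := by
    rw [PowerSeries.isUnit_iff_constantCoeff, hxr]; exact hρ0.isUnit
  obtain ⟨z, hz⟩ := hxu.exists_left_inv
  refine ⟨PowerSeries.X * z, ?_, by simp, ?_⟩
  · have hxe : x ^ n = ∑ j ∈ Finset.range (n - 1),
        PowerSeries.C (P.coeff (j + 2)) * PowerSeries.X ^ j * x ^ (n - 2 - j) := by
      rw [hQ] at hx
      simpa [eval_finsetSum, sub_eq_zero] using hx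
    rw [aeval_eq_sum_range' (n := (n - 1) + 2) (by omega), Finset.sum_range_succ',
      Finset.sum_range_succ', h0, zero_add, h1]
    simp only [zero_smul, add_zero]
    have : ∀ j ∈ Finset.range (n - 1), P.coeff (j + 1 + 1) • (PowerSeries.X * z) ^ (j + 1 + 1)
        = PowerSeries.X ^ 2 * z ^ n * (PowerSeries.C (P.coeff (j + 2)) * PowerSeries.X ^ j *
          x ^ (n - 2 - j)) := by
      intro j hj
      have hj := Finset.mem_range.1 hj
      have hzn : z ^ n = z ^ (j + 2) * z ^ (n - 2 - j) := by
        rw [← pow_add]; congr 1; omega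
      have hzx : z ^ (n - 2 - j) * x ^ (n - 2 - j) = 1 := by rw [← mul_pow, hz, one_pow]
      rw [hzn, PowerSeries.smul_eq_C_mul]
      calc _ = PowerSeries.X ^ 2 * z ^ (j + 2) * (PowerSeries.C (P.coeff (j + 2)) *
            PowerSeries.X ^ j) * 1 := by ring
        _ = _ := by rw [← hzx]; ring
    rw [Finset.sum_congr rfl this, ← Finset.mul_sum, ← hxe, mul_assoc, ← mul_pow, hz]
    simp
  · rw [mul_comm, show (1 : ℕ) = 0 + 1 from rfl, PowerSeries.coeff_succ_mul_X,
      PowerSeries.coeff_zero_eq_constantCoeff_apply]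
    intro h
    have := congrArg PowerSeries.constantCoeff hz
    simp [h] at this

/-- Apart from `0`, the only critical point of `f` is `yc = (n - 1) / n`; it is nondegenerate. -/
theorem exists_critical {k : Type*} [Field k] {n : ℕ} (hn : 2 ≤ n)
    (hn0 : (n : k) ≠ 0) (hn1 : ((n - 1 : ℕ) : k) ≠ 0) :
    ∃ (yc tc : k) (g : k[X]), yc ≠ 0 ∧ tc ≠ 0 ∧
      derivative (X ^ n - X ^ (n - 1) : k[X]) = C (n : k) * X ^ (n - 2) * (X - C yc) ∧
      X ^ n - X ^ (n - 1) - C tc = (X - C yc) ^ 2 * g ∧ g.eval yc ≠ 0 := by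
  obtain ⟨m, rfl⟩ : ∃ m, n = m + 2 := ⟨n - 2, by omega⟩
  simp only [show m + 2 - 1 = m + 1 by omega, show m + 2 - 2 = m by omega] at *
  set yc : k := ((m + 1 : ℕ) : k) / ((m + 2 : ℕ) : k) with hyc
  have hyc0 : yc ≠ 0 := div_ne_zero hn1 hn0
  set tc : k := yc ^ (m + 2) - yc ^ (m + 1) with htc
  have hmul : ((m + 2 : ℕ) : k) * yc = ((m + 1 : ℕ) : k) := by rw [hyc]; field_simp
  have hder : derivative (X ^ (m + 2) - X ^ (m + 1) : k[X]) =
      C ((m + 2 : ℕ) : k) * X ^ m * (X - C yc) := by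
    rw [derivative_sub, derivative_X_pow, derivative_X_pow, mul_sub, mul_right_comm _ (X ^ m),
      mul_right_comm _ (X ^ m), ← C_mul, hmul]
    simp only [show m + 2 - 1 = m + 1 by omega, show m + 1 - 1 = m by omega]
    ring
  have htc0 : tc ≠ 0 := by
    intro h
    have e : ((m + 2 : ℕ) : k) * tc = - yc ^ (m + 1) := by
      rw [htc]
      have : ((m + 2 : ℕ) : k) * (yc ^ (m + 2) - yc ^ (m + 1)) =
        (((m + 2 : ℕ) : k) * yc) * yc ^ (m + 1) - ((m + 2 : ℕ) : k) * yc ^ (m + 1) := by ring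
      rw [this, hmul]; push_cast; ring
    rw [h, mul_zero, eq_comm, neg_eq_zero] at e
    exact pow_ne_zero _ hyc0 e
  obtain ⟨u, hu⟩ : X - C yc ∣ X ^ (m + 2) - X ^ (m + 1) - C tc := by
    rw [dvd_iff_isRoot]; simp [htc]
  have hu' := congrArg derivative hu
  rw [derivative_sub, hder, derivative_C, sub_zero, derivative_mul] at hu'
  obtain ⟨g, rfl⟩ : X - C yc ∣ u := by
    rw [dvd_iff_isRoot]
    have := congrArg (eval yc) hu'
    simpa [eq_comm] using this
  refine ⟨yc, tc, g, hyc0, htc0, hder, by rw [hu]; ring, ?_⟩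
  intro hg
  have := congrArg (fun p => eval yc (derivative p)) hu'
  simp [hg] at this
  rcases this with h | h
  · exact hn0 (by push_cast; exact h)
  · exact hyc0 h.1

/-- Over the critical value `tc`, the double root `yc` gives two branches `yc + W(X)`, `yc + W(-X)`,
and the other roots are simple and lift by Hensel. -/
theorem exists_basePoint {k : Type*} [Field k] [IsAlgClosed k] {n : ℕ} (hn : 2 ≤ n)
    (h2 : (2 : k) ≠ 0) {yc tc : k} {g : k[X]} (hn0 : (n : k) ≠ 0) (htc : tc ≠ 0)
    (hder : derivative (X ^ n - X ^ (n - 1) : k[X]) = C (n : k) * X ^ (n - 2) * (X - C yc))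
    (hfg : X ^ n - X ^ (n - 1) - C tc = (X - C yc) ^ 2 * g) (hg : g.eval yc ≠ 0) :
    ∃ (y : Fin n → PowerSeries k) (a b : Fin n), IsBasePoint y tc a b := by
  classical
  obtain ⟨hmon, hdeg⟩ := rootPoly_monic hn tc
  have hgm : g.Monic := by
    rw [hfg] at hmon
    exact ((monic_X_sub_C yc).pow 2).of_mul_monic_left hmon
  have hgd : g.natDegree = n - 2 := by
    rw [hfg, ((monic_X_sub_C yc).pow 2).natDegree_mul hgm, (monic_X_sub_C yc).natDegree_pow] at hdeg
    simp at hdeg; omega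
  have hfder : ∀ r, g.eval r = 0 → eval r (derivative (X ^ n - X ^ (n - 1) : k[X])) ≠ 0 := by
    intro r hr h
    rw [hder] at h
    simp only [eval_mul, eval_C, eval_pow, eval_X, eval_sub, mul_eq_zero, hn0, false_or,
      sub_eq_zero] at h
    rcases h with h | h
    · have hr0 := eq_zero_of_pow_eq_zero h
      have := congrArg (eval r) hfg
      rw [eval_mul, hr, mul_zero, hr0] at this
      simp [show n ≠ 0 by omega, show n - 1 ≠ 0 by omega] at this
      exact htc this
    · rw [h] at hr; exact hg hr
  have hgsep : g.roots.Nodup := by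
    rw [Multiset.nodup_iff_count_le_one]
    intro r
    rw [count_roots]
    by_contra hlt
    push Not at hlt
    obtain ⟨s, hs⟩ := (le_rootMultiplicity_iff hgm.ne_zero).1 hlt
    refine hfder r (by rw [hs]; simp) ?_
    have : (X ^ n - X ^ (n - 1) : k[X]) = C tc + (X - C yc) ^ 2 * ((X - C r) ^ 2 * s) := by
      rw [← hs, ← hfg]; ring
    rw [this]
    simp [derivative_mul, derivative_pow]
  have hcard : g.roots.toFinset.card = n - 2 := by
    rw [Multiset.toFinset_card_of_nodup hgsep, ← hgd,
      (IsAlgClosed.splits g).natDegree_eq_card_roots]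
  -- the two branches through the critical point
  obtain ⟨W, hW, hW0, hW1⟩ := exists_ramified_branch h2 (X ^ 2 * g.comp (X + C yc)) n hn
    (by
      rw [(monic_X_pow 2).natDegree_mul (hgm.comp_X_add_C yc), natDegree_comp]
      simp [hgd]; omega)
    (by simp [mul_coeff_zero]) (by rw [coeff_X_pow_mul']; simp)
    (by rw [coeff_X_pow_mul']; simpa [coeff_zero_eq_eval_zero] using hg)
  have hroot : ∀ V : PowerSeries k, aeval V (X ^ 2 * g.comp (X + C yc)) = PowerSeries.X ^ 2 →
      (PowerSeries.C yc + V) ^ n - (PowerSeries.C yc + V) ^ (n - 1) =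
        PowerSeries.C tc + PowerSeries.X ^ 2 := by
    intro V hV
    have := congrArg (aeval (PowerSeries.C yc + V)) hfg
    simp only [map_sub, map_mul, map_pow, aeval_X, aeval_C, aeval_comp, map_add,
      PowerSeries.algebraMap_apply, Algebra.algebraMap_self, RingHom.id_apply] at this hV
    rw [sub_eq_iff_eq_add] at this
    rw [this, ← hV, add_comm V]
    ring
  have hother : ∀ r : g.roots.toFinset, ∃ x : PowerSeries k,
      x ^ n - x ^ (n - 1) = PowerSeries.C tc + PowerSeries.X ^ 2 ∧
        PowerSeries.constantCoeff x = r := by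
    rintro ⟨r, hr⟩
    rw [Multiset.mem_toFinset, mem_roots hgm.ne_zero] at hr
    obtain ⟨x, hx, hxr⟩ := powerSeries_hensel
      (X ^ n - X ^ (n - 1) - C (PowerSeries.C tc + PowerSeries.X ^ 2)) (rootPoly_monic hn _).1 r
      (by
        have := congrArg (eval r) hfg
        rw [eval_mul, hr.eq_zero, mul_zero] at this
        simpa using this)
      (by
        have := hfder r hr
        simpa using this)
    exact ⟨x, by simpa [sub_eq_zero] using hx, hxr⟩
  choose x hx hxr using hother
  obtain ⟨m, rfl⟩ : ∃ m, n = m + 2 := ⟨n - 2, by omega⟩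
  have e := (g.roots.toFinset.equivFinOfCardEq hcard).symm
  simp only [show m + 2 - 2 = m by omega] at e
  set V := PowerSeries.evalNegHom W with hV
  have hVc : ∀ j, PowerSeries.coeff j V = (-1) ^ j * PowerSeries.coeff j W := by
    intro j; rw [hV, PowerSeries.evalNegHom, PowerSeries.coeff_rescale]
  have hnC : ∀ c : k, PowerSeries.evalNegHom (PowerSeries.C c) = PowerSeries.C c := by
    intro c
    ext j
    rw [PowerSeries.evalNegHom, PowerSeries.coeff_rescale, PowerSeries.coeff_C]
    split_ifs with h <;> simp [h]
  have hn2 : ∀ S : PowerSeries k, PowerSeries.evalNegHom (PowerSeries.evalNegHom S) = S := by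
    intro S
    ext j
    rw [PowerSeries.evalNegHom, PowerSeries.coeff_rescale, PowerSeries.coeff_rescale, ← mul_assoc,
      ← mul_pow]
    simp
  have hnc : ∀ S : PowerSeries k, PowerSeries.constantCoeff (PowerSeries.evalNegHom S) =
      PowerSeries.constantCoeff S := by
    intro S
    rw [← PowerSeries.coeff_zero_eq_constantCoeff_apply, PowerSeries.evalNegHom,
      PowerSeries.coeff_rescale]; simp
  have hroot' : ∀ S : PowerSeries k, S ^ (m + 2) - S ^ (m + 2 - 1) =
      PowerSeries.C tc + PowerSeries.X ^ 2 → (PowerSeries.evalNegHom S) ^ (m + 2) -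
        (PowerSeries.evalNegHom S) ^ (m + 2 - 1) = PowerSeries.C tc + PowerSeries.X ^ 2 := by
    intro S hS
    rw [← map_pow, ← map_pow, ← map_sub, hS, map_add, hnC, map_pow, PowerSeries.evalNegHom_X]
    ring
  set yp := PowerSeries.C yc + W with hyp
  have hyp' : PowerSeries.evalNegHom yp = PowerSeries.C yc + V := by
    rw [hyp, map_add, hnC]
  set y : Fin (m + 2) → PowerSeries k :=
    Fin.cons yp (Fin.cons (PowerSeries.evalNegHom yp) fun i => x (e i)) with hy
  have hyr : ∀ i, y i ^ (m + 2) - y i ^ (m + 2 - 1) = PowerSeries.C tc + PowerSeries.X ^ 2 := by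
    refine Fin.cases ?_ (Fin.cases ?_ fun i => ?_)
    · exact hroot W hW
    · exact hroot' _ (hroot W hW)
    · exact hx _
  have hycne : ∀ i, yc ≠ (e i : k) := by
    intro i h
    have := (e i).2
    rw [Multiset.mem_toFinset, mem_roots hgm.ne_zero, ← h] at this
    exact hg this
  have hcp : PowerSeries.constantCoeff yp = yc := by simp [hyp, hW0]
  have hyinj : Function.Injective y := by
    rw [hy, Fin.cons_injective_iff, Fin.cons_injective_iff]
    refine ⟨?_, ?_, ?_⟩
    · rintro ⟨i, hi⟩
      revert hi
      refine Fin.cases ?_ (fun i => ?_) i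
      · rw [Fin.cons_zero, hyp', hyp]
        intro h
        have := congrArg (PowerSeries.coeff 1) (add_left_cancel h)
        rw [hVc, pow_one, neg_one_mul, eq_comm, ← sub_eq_zero, sub_neg_eq_add, ← two_mul] at this
        exact mul_ne_zero h2 hW1 this
      · rw [Fin.cons_succ]
        intro h
        have := congrArg PowerSeries.constantCoeff h
        rw [hxr, hcp] at this
        exact hycne i this.symm
    · rintro ⟨i, hi⟩
      have := congrArg PowerSeries.constantCoeff hi
      rw [hxr, hnc, hcp] at this
      exact hycne i this.symm
    · intro i j hij
      apply e.injective
      apply Subtype.ext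
      rw [← hxr, ← hxr]
      exact congrArg _ hij
  refine ⟨y, 0, 1, ⟨by simp, hyinj, rootTuple_of_injective hn hyinj hyr, ?_⟩⟩
  have hroots := rootTuple_of_injective hn hyinj hyr
  refine Fin.cases ?_ (Fin.cases ?_ fun i => ?_)
  · rw [Equiv.swap_apply_left]; rfl
  · rw [show (Fin.succ 0 : Fin (m + 2)) = 1 from rfl, Equiv.swap_apply_right]
    exact hn2 yp
  · rw [Equiv.swap_apply_of_ne_of_ne (by simp)
      (by rw [← Fin.succ_zero_eq_one]; exact fun h => Fin.succ_ne_zero _ (Fin.succ_injective _ h))]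
    -- the conjugate is again a root, with the same constant coefficient
    have h1 := hroot' _ (hyr i.succ.succ)
    have h3 : ∃ j, PowerSeries.evalNegHom (y i.succ.succ) = y j := by
      have := congrArg (eval (PowerSeries.evalNegHom (y i.succ.succ))) hroots
      rw [eval_sub, eval_sub, eval_pow, eval_pow, eval_X, eval_C, h1, sub_self, eval_prod,
        Finset.prod_eq_zero_iff] at this
      obtain ⟨j, _, hj⟩ := this
      exact ⟨j, by simpa [sub_eq_zero] using hj⟩
    obtain ⟨j, hj⟩ := h3
    have hcj := congrArg PowerSeries.constantCoeff hj
    rw [hnc] at hcj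
    have hyi : PowerSeries.constantCoeff (y i.succ.succ) = e i := hxr _
    rw [hyi] at hcj
    rw [hj]
    revert hcj
    refine Fin.cases ?_ (Fin.cases ?_ fun l => ?_) j
    · intro h; exact absurd (h.trans hcp).symm (hycne i)
    · intro h; exact absurd (h.trans ((hnc _).trans hcp)).symm (hycne i)
    · intro h
      have : (e i : k) = e l := h.trans (hxr _)
      rw [e.injective (Subtype.ext this)]

/-! ### Monodromy -/

theorem RootTuple.exists_eq {C : Type*} [CommRing C] [IsDomain C] {n : ℕ} {w : Fin n → C} {τ : C}
    (h : RootTuple w τ) {x : C} (hx : x ^ n - x ^ (n - 1) = τ) : ∃ j, x = w j := by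
  have := congrArg (eval x) h
  rw [eval_sub, eval_sub, eval_pow, eval_pow, eval_X, eval_C, hx, sub_self, eval_prod,
    Finset.prod_eq_zero_iff] at this
  obtain ⟨j, _, hj⟩ := this
  exact ⟨j, by simpa [sub_eq_zero] using hj⟩

/-- An embedding `f` of `L` that fixes `T0` extends to an algebra containing `L` and all roots over
`T0`. -/
theorem exists_extension_hom {k L Ω : Type*} [Field k] [Field L] [Field Ω] [Algebra k L]
    [Algebra k Ω] [Algebra L Ω] [IsScalarTower k L Ω] {n : ℕ} (hn : 2 ≤ n) (f : L →ₐ[k] Ω)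
    {z : Fin n → Ω} {T0 : L} (hT : RootTuple z (algebraMap L Ω T0))
    (hf : f T0 = algebraMap L Ω T0) :
    ∃ (M : Subalgebra k Ω) (φ : M →ₐ[k] Ω) (hL : ∀ c : L, algebraMap L Ω c ∈ M),
      (∀ l, z l ∈ M) ∧ Function.Injective φ ∧ ∀ c, φ ⟨_, hL c⟩ = f c := by
  obtain ⟨hmon, hdeg⟩ := rootPoly_monic hn T0
  have hmap : (X ^ n - X ^ (n - 1) - C T0).map f.toRingHom = ∏ i, (X - C (z i)) := by
    rw [hT, ← hf]
    simp only [Polynomial.map_sub, Polynomial.map_pow, map_X, map_C]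
    rfl
  have hsp : ((X ^ n - X ^ (n - 1) - C T0).map f.toRingHom).Splits := by
    rw [hmap]
    exact Splits.prod fun i _ => Splits.X_sub_C _
  have key : ∀ s ∈ Set.range z, IsIntegral L s ∧ ((minpoly L s).map f.toRingHom).Splits := by
    rintro _ ⟨l, rfl⟩
    have h_integral : aeval (z l) (X ^ n - X ^ (n - 1) - C T0) = 0 := by
      simp [hT.pow_eq l]
    exact ⟨⟨_, hmon, h_integral⟩, Splits.of_dvd hsp (hmon.map f.toRingHom).ne_zero
      (Polynomial.map_dvd _ (minpoly.dvd L _ h_integral))⟩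
  obtain ⟨φ, hφ⟩ := IntermediateField.exists_algHom_adjoin_of_splits' f key
  refine ⟨(IntermediateField.adjoin L (Set.range z)).toSubalgebra.restrictScalars k, φ,
    fun c => (IntermediateField.adjoin L (Set.range z)).algebraMap_mem c,
    fun l => IntermediateField.subset_adjoin L _ ⟨l, rfl⟩, φ.toRingHom.injective, fun c => ?_⟩
  rw [← hφ]
  rfl

/-- An embedding of `L` fixing `T0` induces a permutation of the roots over `T0` that preserves all
polynomial relations between them. -/
theorem exists_perm_of_hom {k L Ω : Type*} [Field k] [Field L] [Field Ω] [Algebra k L]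
    [Algebra k Ω] [Algebra L Ω] [IsScalarTower k L Ω] {n : ℕ} (hn : 2 ≤ n) (f : L →ₐ[k] Ω)
    {z : Fin n → Ω} {T0 : L} (hz : Function.Injective z) (hT : RootTuple z (algebraMap L Ω T0))
    (hf : f T0 = algebraMap L Ω T0) :
    ∃ σ : Equiv.Perm (Fin n),
      (∀ S : MvPolynomial (Fin n) k, MvPolynomial.aeval z S = 0 →
        MvPolynomial.aeval (z ∘ σ) S = 0) ∧
      ∀ l (c : L), algebraMap L Ω c = z l → f c = z (σ l) := by
  obtain ⟨M, φ, hL, hmem, hφ, hφL⟩ := exists_extension_hom hn f hT hf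
  have hex : ∀ l, ∃ j, φ ⟨z l, hmem l⟩ = z j := by
    intro l
    refine hT.exists_eq ?_
    have : (⟨z l, hmem l⟩ : M) ^ n - (⟨z l, hmem l⟩ : M) ^ (n - 1) =
        ⟨_, hL T0⟩ := by
      apply Subtype.ext
      simpa using hT.pow_eq l
    rw [← map_pow, ← map_pow, ← map_sub, this, hφL, hf]
  choose s hs using hex
  have hsinj : Function.Injective s := by
    intro l l' h
    have h1 : φ ⟨z l, hmem l⟩ = φ ⟨z l', hmem l'⟩ := by rw [hs, hs, h]
    exact hz (congrArg Subtype.val (hφ h1))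
  refine ⟨Equiv.ofBijective s (Finite.injective_iff_bijective.1 hsinj), ?_, ?_⟩
  · intro S hS
    have h1 : (z ∘ (Equiv.ofBijective s (Finite.injective_iff_bijective.1 hsinj))) =
        fun l => φ ⟨z l, hmem l⟩ := by
      ext l; simp [hs]
    have h2 : MvPolynomial.aeval (fun l => (⟨z l, hmem l⟩ : M)) S = 0 := by
      apply Subtype.ext
      rw [← Subalgebra.coe_val, MvPolynomial.comp_aeval_apply]
      exact hS
    rw [h1, ← MvPolynomial.comp_aeval_apply, h2, map_zero]
  · intro l c hc
    rw [← hφL]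
    simp only [Equiv.ofBijective_apply]
    rw [← hs]
    congr 1
    exact Subtype.ext hc

/-- Double transitivity: for transcendental `T`, every pair of distinct roots can be carried to every
other such pair by a permutation that preserves the polynomial relations between the roots. The
quotient `v` of two roots generates the field of both, as `z i = (v ^ (n - 1) - 1) / (v ^ n - 1)`
for `z j = v * z i`, and it is transcendental, so `v` can be sent to the quotient of the other pair. -/
theorem exists_perm_of_transcendental {k Ω : Type*} [Field k] [Field Ω] [Algebra k Ω] {n : ℕ}
    (hn : 2 ≤ n) {z : Fin n → Ω} {T : Ω} (hz : Function.Injective z) (hT : RootTuple z T)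
    (htr : Transcendental k T) {i j i' j' : Fin n} (hij : i ≠ j) (hij' : i' ≠ j') :
    ∃ σ : Equiv.Perm (Fin n),
      (∀ S : MvPolynomial (Fin n) k, MvPolynomial.aeval z S = 0 →
        MvPolynomial.aeval (z ∘ σ) S = 0) ∧ σ i = i' ∧ σ j = j' := by
  have hT0 : T ≠ 0 := by
    rintro rfl; exact htr (isAlgebraic_zero)
  have hz0 : ∀ i, z i ≠ 0 := by
    intro i h
    have := hT.pow_eq i
    rw [h, zero_pow (by omega), zero_pow (by omega), sub_zero] at this
    exact hT0 this.symm
  -- the curve `f y = f z` is parametrised by the quotient `v` of the coordinates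
  have hpar : ∀ i j : Fin n, i ≠ j →
      (z j / z i) ^ n ≠ 1 ∧ z i = ((z j / z i) ^ (n - 1) - 1) / ((z j / z i) ^ n - 1) := by
    intro i j hij
    set v := z j / z i with hv
    have hzj : z j = v * z i := by rw [hv]; field_simp [hz0 i]
    have e := (hT.pow_eq j).trans (hT.pow_eq i).symm
    have e2 : z i * (v ^ n - 1) = v ^ (n - 1) - 1 := by
      have h1 : z i ^ n = z i ^ (n - 1) * z i := by rw [← pow_succ]; congr 1; omega
      rw [hzj, mul_pow, mul_pow, h1] at e
      have h2 : z i ^ (n - 1) ≠ 0 := pow_ne_zero _ (hz0 i)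
      apply mul_left_cancel₀ h2
      linear_combination e
    have h1 : v ^ n ≠ 1 := by
      intro h
      rw [h, sub_self, mul_zero, eq_comm, sub_eq_zero] at e2
      have h3 : v ^ n = v ^ (n - 1) * v := by rw [← pow_succ]; congr 1; omega
      rw [h, e2, one_mul] at h3
      rw [← h3, one_mul] at hzj
      exact hij (hz hzj).symm
    exact ⟨h1, by rw [← e2, mul_div_cancel_right₀ _ (sub_ne_zero.2 h1)]⟩
  have hvtr : ∀ i j : Fin n, i ≠ j → Transcendental k (z j / z i) := by
    intro i j hij halg
    have hzi : IsAlgebraic k (z i) := by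
      rw [(hpar i j hij).2, div_eq_mul_inv]
      exact ((halg.pow _).sub isAlgebraic_one).mul ((halg.pow _).sub isAlgebraic_one).inv
    exact htr (by rw [← hT.pow_eq i]; exact (hzi.pow _).sub (hzi.pow _))
  have hlift : ∀ i j : Fin n, i ≠ j → ∃ φ : FractionRing k[X] →ₐ[k] Ω,
      φ (algebraMap k[X] _ X) = z j / z i := by
    intro i j hij
    have hinj : Function.Injective (aeval (R := k) (z j / z i)) :=
      transcendental_iff_injective.1 (hvtr i j hij)
    refine ⟨IsFractionRing.liftAlgHom hinj, ?_⟩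
    rw [IsFractionRing.liftAlgHom_apply, IsFractionRing.lift_algebraMap]
    simp
  set x : FractionRing k[X] := algebraMap k[X] _ X with hx
  set Z : FractionRing k[X] := (x ^ (n - 1) - 1) / (x ^ n - 1) with hZ
  have hZφ : ∀ (i j : Fin n) (φ : FractionRing k[X] →ₐ[k] Ω), i ≠ j → φ x = z j / z i →
      φ Z = z i ∧ φ (x * Z) = z j ∧ φ (Z ^ n - Z ^ (n - 1)) = T := by
    intro i j φ hij hφ
    have h1 : φ Z = z i := by
      rw [hZ, map_div₀, map_sub, map_sub, map_pow, map_pow, map_one, hφ, ← (hpar i j hij).2]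
    refine ⟨h1, ?_, ?_⟩
    · rw [map_mul, h1, hφ]; field_simp [hz0 i]
    · rw [map_sub, map_pow, map_pow, h1, hT.pow_eq]
  obtain ⟨φ, hφ⟩ := hlift i j hij
  obtain ⟨φ', hφ'⟩ := hlift i' j' hij'
  obtain ⟨h1, h2, h3⟩ := hZφ i j φ hij hφ
  obtain ⟨h1', h2', h3'⟩ := hZφ i' j' φ' hij' hφ'
  let _ : Algebra (FractionRing k[X]) Ω := φ.toRingHom.toAlgebra
  have htower : IsScalarTower k (FractionRing k[X]) Ω :=
    IsScalarTower.of_algebraMap_eq fun c => (φ.commutes c).symm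
  have ham : ∀ c, algebraMap (FractionRing k[X]) Ω c = φ c := fun c => rfl
  obtain ⟨σ, hσ, hσ'⟩ := exists_perm_of_hom hn φ' (T0 := Z ^ n - Z ^ (n - 1)) hz
    (by rw [ham, h3]; exact hT) (by rw [ham, h3, h3'])
  refine ⟨σ, hσ, hz ?_, hz ?_⟩
  · rw [← hσ' i Z (by rw [ham, h1]), h1']
  · rw [← hσ' j (x * Z) (by rw [ham, h2]), h2']

theorem aeval_base_eq_coe {k : Type*} [Field k] (tc : k) (N : k[X]) :
    aeval (PowerSeries.C tc + PowerSeries.X ^ 2 : PowerSeries k) N =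
      ((N.comp (C tc + X ^ 2) : k[X]) : PowerSeries k) := by
  have : (PowerSeries.C tc + PowerSeries.X ^ 2 : PowerSeries k) =
    Polynomial.coeToPowerSeries.algHom k (C tc + X ^ 2) := by simp
  rw [this, aeval_algHom_apply, comp_eq_aeval]
  simp

theorem aeval_base_injective {k : Type*} [Field k] (tc : k) :
    Function.Injective (aeval (R := k) (PowerSeries.C tc + PowerSeries.X ^ 2 : PowerSeries k)) := by
  rw [injective_iff_map_eq_zero]
  intro N hN
  rw [aeval_base_eq_coe, Polynomial.coe_eq_zero_iff, comp_eq_zero_iff] at hN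
  rcases hN with h | ⟨_, h⟩
  · exact h
  · have := congrArg natDegree h
    rw [natDegree_C, add_comm, natDegree_X_pow_add_C] at this
    omega

theorem evalNegHom_C {k : Type*} [CommRing k] (c : k) :
    PowerSeries.evalNegHom (PowerSeries.C c) = PowerSeries.C c := by
  ext j
  rw [PowerSeries.evalNegHom, PowerSeries.coeff_rescale, PowerSeries.coeff_C]
  split_ifs with h <;> simp [h]

theorem IsBasePoint.aeval_swap {k : Type*} [Field k] {n : ℕ}
    {y : Fin n → PowerSeries k} {tc : k} {a b : Fin n} (h : IsBasePoint y tc a b)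
    (S : MvPolynomial (Fin n) k) : MvPolynomial.aeval (y ∘ Equiv.swap a b) S =
      PowerSeries.evalNegHom (MvPolynomial.aeval y S) := by
  set φ : PowerSeries k →ₐ[k] PowerSeries k :=
    { PowerSeries.evalNegHom with commutes' := fun c => evalNegHom_C c }
  have h1 : ∀ s, φ s = PowerSeries.evalNegHom s := fun s => rfl
  rw [← h1, MvPolynomial.comp_aeval_apply]
  congr 2
  ext1 i
  rw [h1, h.neg]
  rfl

/-- The relations between the coordinates of a base point are stable under all permutations. Those that
preserve the relations form a group, which contains the transposition `(a b)` because of `X ↦ -X`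
and is doubly transitive, hence contains every transposition. -/
theorem IsBasePoint.monodromy {k : Type*} [Field k] {n : ℕ} (hn : 2 ≤ n)
    {y : Fin n → PowerSeries k} {tc : k} {a b : Fin n} (h : IsBasePoint y tc a b)
    (σ : Equiv.Perm (Fin n)) (S : MvPolynomial (Fin n) k) (hS : MvPolynomial.aeval y S = 0) :
    MvPolynomial.aeval (y ∘ σ) S = 0 := by
  classical
  set M : Submonoid (Equiv.Perm (Fin n)) :=
    { carrier := {σ | ∀ S : MvPolynomial (Fin n) k, MvPolynomial.aeval y S = 0 →
        MvPolynomial.aeval (y ∘ σ) S = 0}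
      one_mem' := fun S hS => hS
      mul_mem' := by
        intro σ τ hσ hτ S hS
        have h1 := hσ (MvPolynomial.rename τ S) (by
          rw [MvPolynomial.aeval_rename]; exact hτ S hS)
        rw [MvPolynomial.aeval_rename] at h1
        exact h1 } with hM
  have hMmem : ∀ σ, σ ∈ M ↔ ∀ S : MvPolynomial (Fin n) k, MvPolynomial.aeval y S = 0 →
        MvPolynomial.aeval (y ∘ σ) S = 0 := fun σ => Iff.rfl
  have hinv : ∀ σ ∈ M, σ⁻¹ ∈ M := fun σ hσ => by
    have h1 : σ⁻¹ = σ ^ (orderOf σ - 1) := by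
      apply inv_eq_of_mul_eq_one_right
      rw [mul_pow_sub_one (orderOf_pos σ).ne', pow_orderOf_eq_one]
    rw [h1]
    exact Submonoid.pow_mem M hσ _
  have hswap : Equiv.swap a b ∈ M := by
    intro S hS
    rw [h.aeval_swap, hS, map_zero]
  set Ω := FractionRing (PowerSeries k)
  set ι : PowerSeries k →ₐ[k] Ω := IsScalarTower.toAlgHom k (PowerSeries k) Ω with hι
  have hιinj : Function.Injective ι := IsFractionRing.injective (PowerSeries k) Ω
  have htrans : ∀ i j, i ≠ j → ∃ σ ∈ M, σ a = i ∧ σ b = j := by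
    intro i j hij
    have hroot : RootTuple (ι ∘ y) (ι (PowerSeries.C tc + PowerSeries.X ^ 2)) := by
      have := congrArg (Polynomial.map ι.toRingHom) h.root
      simpa [Polynomial.map_prod, RootTuple] using this
    obtain ⟨σ, hσ, h1, h2⟩ := exists_perm_of_transcendental (k := k) hn (hιinj.comp h.inj) hroot
      (by
        rw [transcendental_iff_injective]
        have : (aeval (R := k) (ι (PowerSeries.C tc + PowerSeries.X ^ 2)) : k[X] → Ω) =
            ι ∘ (aeval (PowerSeries.C tc + PowerSeries.X ^ 2)) := by
          ext p; rw [aeval_algHom_apply]; rfl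
        rw [this]
        exact hιinj.comp (aeval_base_injective tc)) h.ne hij
    refine ⟨σ, fun S hS => ?_, h1, h2⟩
    have h3 := hσ S (by
      rw [show (ι ∘ y) = fun i => ι (y i) from rfl, ← MvPolynomial.comp_aeval_apply, hS, map_zero])
    rw [show ((ι ∘ y) ∘ σ) = fun i => ι ((y ∘ σ) i) from rfl, ← MvPolynomial.comp_aeval_apply] at h3
    exact (map_eq_zero_iff ι hιinj).1 h3
  have hall : ∀ i j, i ≠ j → Equiv.swap i j ∈ M := by
    intro i j hij
    obtain ⟨σ, hσ, rfl, rfl⟩ := htrans i j hij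
    have : Equiv.swap (σ a) (σ b) = σ * Equiv.swap a b * σ⁻¹ := by
      rw [Equiv.swap_apply_apply]
    rw [this]
    exact M.mul_mem (M.mul_mem hσ hswap) (hinv σ hσ)
  have hσM : σ ∈ M := by
    refine Equiv.Perm.swap_induction_on σ M.one_mem fun τ i j hij hτ => M.mul_mem (hall i j hij) hτ
  exact hσM S hS

/-! ### The order bound and specialization -/

theorem eq_zero_of_X_pow_dvd_aeval_base {k : Type*} [Field k] (tc : k) {N : k[X]} {r : ℕ}
    (hN : N.natDegree ≤ r)
    (h : PowerSeries.X ^ (2 * r + 1) ∣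
      aeval (PowerSeries.C tc + PowerSeries.X ^ 2 : PowerSeries k) N) : N = 0 := by
  rw [aeval_base_eq_coe, PowerSeries.X_pow_dvd_iff] at h
  have hd : (N.comp (C tc + X ^ 2)).natDegree ≤ 2 * r := by
    rw [natDegree_comp, add_comm, natDegree_X_pow_add_C]; omega
  have h0 : N.comp (C tc + X ^ 2) = 0 := by
    ext i
    rcases lt_or_ge i (2 * r + 1) with hi | hi
    · simpa using h i hi
    · rw [coeff_eq_zero_of_natDegree_lt (by omega), coeff_zero]
  apply aeval_base_injective tc
  rw [aeval_base_eq_coe, h0, map_zero, Polynomial.coe_zero]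

theorem IsBasePoint.aeval_comp_eq_zero_iff {k : Type*} [Field k] {n : ℕ} (hn : 2 ≤ n)
    {y : Fin n → PowerSeries k} {tc : k} {a b : Fin n} (h : IsBasePoint y tc a b)
    (σ : Equiv.Perm (Fin n)) (S : MvPolynomial (Fin n) k) :
    MvPolynomial.aeval (y ∘ σ) S = 0 ↔ MvPolynomial.aeval y S = 0 := by
  refine ⟨fun hS => ?_, h.monodromy hn σ S⟩
  rw [← MvPolynomial.aeval_rename] at hS
  have := h.monodromy hn σ⁻¹ _ hS
  rw [MvPolynomial.aeval_rename] at this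
  convert this using 2
  ext i
  simp

/-- Order bound: a polynomial of degree at most `D` in the roots that vanishes at the base point to
order more than `(n - 1)! * D` is zero. Its norm `N` has degree at most `(n - 1)! * D` and is
evaluated at `tc + X ^ 2`, so could have order at most twice that in `X`; but the factors of the two
orderings `1` and `(a b)`, conjugate under `X ↦ -X`, have the same order. -/
theorem IsBasePoint.eq_zero_of_X_pow_dvd {k : Type*} [Field k] {n : ℕ} (hn : 2 ≤ n)
    {y : Fin n → PowerSeries k} {tc : k} {a b : Fin n} (h : IsBasePoint y tc a b)
    (S : MvPolynomial (Fin n) k) {D : ℕ} (hS : S.totalDegree ≤ D)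
    (hdvd : PowerSeries.X ^ ((n - 1).factorial * D + 1) ∣ MvPolynomial.aeval y S) :
    MvPolynomial.aeval y S = 0 := by
  classical
  obtain ⟨N, hN, hNprod⟩ := exists_norm hn S hS
  have hprod := hNprod (PowerSeries k) y _ h.root
  have hneg : PowerSeries.X ^ ((n - 1).factorial * D + 1) ∣
      MvPolynomial.aeval (y ∘ Equiv.swap a b) S := by
    rw [h.aeval_swap]
    have := map_dvd (PowerSeries.evalNegHom (A := k)) hdvd
    rw [map_pow, PowerSeries.evalNegHom_X, neg_pow] at this
    exact (Dvd.intro_left _ rfl).trans this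
  have hN0 : N = 0 := by
    refine eq_zero_of_X_pow_dvd_aeval_base tc hN ?_
    rw [← hprod]
    have hne : (1 : Equiv.Perm (Fin n)) ≠ Equiv.swap a b := by
      intro h1
      have := congrArg (fun σ => σ a) h1
      simp at this
      exact h.ne this
    refine dvd_trans ?_ (Finset.prod_dvd_prod_of_subset {1, Equiv.swap a b} Finset.univ _
      (Finset.subset_univ _))
    rw [Finset.prod_pair hne]
    refine dvd_trans (pow_dvd_pow _ (show 2 * ((n - 1).factorial * D) + 1 ≤
      ((n - 1).factorial * D + 1) + ((n - 1).factorial * D + 1) by omega)) ?_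
    rw [pow_add]
    exact mul_dvd_mul hdvd hneg
  rw [hN0, map_zero, Finset.prod_eq_zero_iff] at hprod
  obtain ⟨σ, _, hσ⟩ := hprod
  exact (h.aeval_comp_eq_zero_iff hn σ S).1 hσ

/-- A relation between the roots which holds at the base point holds on every fibre. If `S` vanishes
at the base point, then the norm of `S - S(η)` is the constant `(-S(η)) ^ n!` there, hence
identically; on the fibre of `η` that norm has a zero factor. -/
theorem IsBasePoint.aeval_eq_zero {k : Type*} [Field k] {n : ℕ} (hn : 2 ≤ n)
    {y : Fin n → PowerSeries k} {tc : k} {a b : Fin n} (h : IsBasePoint y tc a b)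
    (S : MvPolynomial (Fin n) k) (hS : MvPolynomial.aeval y S = 0) {η : Fin n → k} {t : k}
    (hη : RootTuple η t) : MvPolynomial.aeval η S = 0 := by
  classical
  set c : k := - MvPolynomial.aeval η S with hc
  obtain ⟨N, -, hNprod⟩ := exists_norm hn (S + MvPolynomial.C c) le_rfl
  have h1 := hNprod (PowerSeries k) y _ h.root
  have h2 := hNprod k η _ hη
  have h3 : N = C (c ^ Fintype.card (Equiv.Perm (Fin n))) := by
    apply aeval_base_injective tc
    rw [← h1, aeval_C, map_pow]
    simp only [map_add, h.monodromy hn _ S hS, zero_add, MvPolynomial.aeval_C]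
    rw [Finset.prod_const]
    rfl
  rw [h3, aeval_C, Finset.prod_eq_zero (Finset.mem_univ 1)] at h2
  · have h4 : c = 0 := by
      exact eq_zero_of_pow_eq_zero h2.symm
    simpa [hc] using h4
  · simp [hc]

/-! ### Staircase monomials -/

/-- A combination of the monomials `∏ x_i ^ α_i`, `α_i ≤ i` (indices from `0`), is determined by its
values on the injective tuples with entries in a set of at least `n` elements. Fixing the last entry
and using induction for the others, each coefficient becomes a polynomial of degree less than `n` in
that entry, with at least `n` zeros. -/
theorem staircase_eq_zero {D : Type*} [CommRing D] [IsDomain D] [DecidableEq D] (n : ℕ) :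
    ∀ (s : Finset D) (_ : n ≤ s.card) (c : (∀ i : Fin n, Fin ((i : ℕ) + 1)) → D)
      (_ : ∀ x : Fin n → D, Function.Injective x → (∀ i, x i ∈ s) →
        ∑ α, c α * ∏ i, x i ^ (α i : ℕ) = 0), ∀ α, c α = 0 := by
  induction n with
  | zero =>
    intro s _ c h α
    have := h (fun i => i.elim0) (fun i => i.elim0) (fun i => i.elim0)
    rw [Fintype.sum_eq_single α (fun β hβ => absurd (Subsingleton.elim β α) hβ)] at this
    simpa using this
  | succ n ih =>
    intro s hs c h α
    set e := Fin.snocEquiv (fun i : Fin (n + 1) => Fin ((i : ℕ) + 1)) with he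
    have key : ∀ d ∈ s, ∀ α' : ∀ i : Fin n, Fin ((i : ℕ) + 1),
        ∑ l : Fin (n + 1), c (e (l, α')) * d ^ (l : ℕ) = 0 := by
      intro d hd
      refine ih (s.erase d) (by rw [Finset.card_erase_of_mem hd]; omega) _ ?_
      intro x hx hxs
      have h1 := h (Fin.snoc (α := fun _ => D) x d) (by
          rw [Fin.snoc_injective_iff]
          refine ⟨hx, ?_⟩
          rintro ⟨i, hi⟩
          exact (Finset.mem_erase.1 (hxs i)).1 hi)
        (by
          refine Fin.lastCases ?_ fun i => ?_
          · simpa using hd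
          · simpa using (Finset.mem_erase.1 (hxs i)).2)
      rw [← e.sum_comp, Fintype.sum_prod_type, Finset.sum_comm] at h1
      rw [← h1]
      refine Finset.sum_congr rfl fun α' _ => ?_
      rw [Finset.sum_mul]
      refine Finset.sum_congr rfl fun l _ => ?_
      rw [Fin.prod_univ_castSucc]
      simp only [Fin.snoc_castSucc, Fin.snoc_last]
      have e1 : ∀ i : Fin n, (e (l, α')) i.castSucc = α' i := fun i => by
        exact Fin.snoc_castSucc (α := fun i : Fin (n + 1) => Fin ((i : ℕ) + 1)) l α' i
      have e2 : (e (l, α')) (Fin.last n) = l := by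
        exact Fin.snoc_last (α := fun i : Fin (n + 1) => Fin ((i : ℕ) + 1)) l α'
      rw [e2]
      have e3 : ∀ i : Fin n, x i ^ ((e (l, α')) i.castSucc : ℕ) = x i ^ (α' i : ℕ) := fun i => by
        rw [e1 i]
      rw [Finset.prod_congr rfl fun i _ => e3 i]
      simp only [Fin.val_last]
      ring
    obtain ⟨⟨l, α'⟩, rfl⟩ := e.surjective α
    set p : D[X] := ∑ l : Fin (n + 1), C (c (e (l, α'))) * X ^ (l : ℕ) with hp
    have hdeg : p.degree < s.card := by
      refine (degree_sum_le _ _).trans_lt ?_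
      rw [Finset.sup_lt_iff (WithBot.bot_lt_coe _)]
      intro l _
      refine (degree_C_mul_X_pow_le _ _).trans_lt ?_
      exact_mod_cast lt_of_lt_of_le l.2 hs
    have hp0 : p = 0 := by
      refine eq_zero_of_degree_lt_of_eval_finset_eq_zero s hdeg fun d hd => ?_
      rw [hp, eval_finsetSum]
      simpa using key d hd α'
    have := congrArg (fun p => coeff p (l : ℕ)) hp0
    simp only [hp, finsetSum_coeff, coeff_C_mul_X_pow, coeff_zero] at this
    have h2 := Fintype.sum_eq_single (f := fun x : Fin (n + 1) =>
      if (l : ℕ) = (x : ℕ) then c (e (x, α')) else 0) l (fun l' hl => by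
        rw [if_neg]
        exact fun h => hl (Fin.ext h.symm))
    rw [if_pos rfl] at h2
    exact h2.symm.trans this

/-- Indices `(α, j)` of the staircase monomials: exponents `α_i ≤ i`, with `i` counted from `0`, and
an extra exponent `j < a`. -/
abbrev StairIdx (n a : ℕ) : Type := (∀ i : Fin n, Fin ((i : ℕ) + 1)) × Fin a

/-- The staircase monomial `(∏ x_l) ^ j * ∏ x_l ^ α_l`. On the roots of `f = τ` the first factor is
`(± τ) ^ j`. -/
noncomputable def stairMon (k : Type*) [CommRing k] {n a : ℕ} (i : StairIdx n a) :
    MvPolynomial (Fin n) k :=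
  ∏ l, MvPolynomial.X l ^ ((i.1 l : ℕ) + (i.2 : ℕ))

theorem card_stairIdx (n a : ℕ) : Fintype.card (StairIdx n a) = n.factorial * a := by
  rw [Fintype.card_prod, Fintype.card_pi, Fintype.card_fin]
  simp only [Fintype.card_fin]
  rw [Fin.prod_univ_eq_prod_range (fun i => i + 1), Finset.prod_range_add_one_eq_factorial]

theorem sum_stairIdx_le {n a : ℕ} (i : StairIdx n a) :
    ∑ l, ((i.1 l : ℕ) + (i.2 : ℕ)) ≤ n * (a - 1) + n * (n - 1) / 2 := by
  have h1 : ∀ l ∈ (Finset.univ : Finset (Fin n)), (i.1 l : ℕ) + (i.2 : ℕ) ≤ (l : ℕ) + (a - 1) := by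
    intro l _
    have h1 := (i.1 l).2
    have h2 := i.2.2
    omega
  refine (Finset.sum_le_sum h1).trans ?_
  rw [Finset.sum_add_distrib, Fin.sum_univ_eq_sum_range (fun i => i), Finset.sum_range_id]
  simp
  omega

theorem totalDegree_stairMon (k : Type*) [CommRing k] {n a : ℕ} (i : StairIdx n a) :
    (stairMon k i).totalDegree ≤ n * (a - 1) + n * (n - 1) / 2 := by
  refine (MvPolynomial.totalDegree_finsetProd _ _).trans
    ((Finset.sum_le_sum fun l _ => ?_).trans (sum_stairIdx_le i))
  rcases subsingleton_or_nontrivial k with h | h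
  · rw [Subsingleton.elim (MvPolynomial.X (R := k) l ^ _) 0]; simp
  · rw [MvPolynomial.totalDegree_X_pow]

theorem aeval_stairMon {k C : Type*} [CommRing k] [CommRing C] [Algebra k C] {n a : ℕ}
    (i : StairIdx n a) (w : Fin n → C) :
    MvPolynomial.aeval w (stairMon k i) = (∏ l, w l) ^ (i.2 : ℕ) * ∏ l, w l ^ (i.1 l : ℕ) := by
  rw [stairMon, map_prod, ← Finset.prod_pow, ← Finset.prod_mul_distrib]
  refine Finset.prod_congr rfl fun l _ => ?_
  rw [map_pow, MvPolynomial.aeval_X, add_comm, pow_add]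

theorem RootTuple.prod_eq {C : Type*} [CommRing C] {n : ℕ} (hn : 2 ≤ n)
    {w : Fin n → C} {τ : C} (h : RootTuple w τ) : ∏ l, w l = (-1) ^ (n + 1) * τ := by
  have := congrArg (eval 0) h
  rw [eval_prod] at this
  simp [show n ≠ 0 by omega, show n - 1 ≠ 0 by omega, Finset.prod_neg] at this
  calc ∏ l, w l = (-1) ^ n * ((-1) ^ n * ∏ l, w l) := by
        rw [← mul_assoc, ← mul_pow]; simp
    _ = _ := by rw [this]; ring

/-- The staircase monomials are linearly independent at the base point: their relations hold for all
orderings of the `n` distinct roots, so `staircase_eq_zero` applies with coefficients in `k[τ]`. -/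
theorem IsBasePoint.stair_independent {k : Type*} [Field k] {n : ℕ} (hn : 2 ≤ n)
    {y : Fin n → PowerSeries k} {tc : k} {a b : Fin n} (h : IsBasePoint y tc a b) {d : ℕ}
    (c : StairIdx n d → k)
    (hc : ∑ i, c i • MvPolynomial.aeval y (stairMon k i) = 0) : c = 0 := by
  classical
  set P := ∏ l, y l with hP
  set s : Finset (PowerSeries k) := Finset.univ.image y with hs
  have hcard : n ≤ s.card := by
    rw [hs, Finset.card_image_of_injective _ h.inj]; simp
  have key := staircase_eq_zero n s hcard (fun α => ∑ j : Fin d, c (α, j) • P ^ (j : ℕ)) (by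
    intro x hx hxs
    have hex : ∀ i, ∃ j, y j = x i := fun i => by
      have := hxs i
      rw [hs, Finset.mem_image] at this
      obtain ⟨j, _, hj⟩ := this
      exact ⟨j, hj⟩
    choose σ hσ using hex
    have hσinj : Function.Injective σ := fun i j hij => hx (by rw [← hσ, ← hσ, hij])
    set π := Equiv.ofBijective σ (Finite.injective_iff_bijective.1 hσinj)
    have hxπ : x = y ∘ π := by ext1 i; exact (hσ i).symm
    have h1 := h.monodromy hn π (∑ i, c i • stairMon k i) (by
      rw [map_sum]; simpa only [map_smul] using hc)
    rw [map_sum] at h1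
    simp only [map_smul, ← hxπ, aeval_stairMon] at h1
    rw [Fintype.sum_prod_type] at h1
    rw [← h1]
    refine Finset.sum_congr rfl fun α _ => ?_
    rw [Finset.sum_mul]
    refine Finset.sum_congr rfl fun j _ => ?_
    have hPx : ∏ l, x l = P := by
      rw [hxπ, hP]; exact Equiv.prod_comp π y
    rw [hPx, smul_mul_assoc])
  ext ⟨α, j⟩
  have h2 := key α
  have h3 : (∑ j : Fin d, C (c (α, j) * ((-1) ^ (n + 1)) ^ (j : ℕ)) * X ^ (j : ℕ) : k[X]) = 0 := by
    apply aeval_base_injective tc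
    rw [map_zero, ← h2, map_sum]
    refine Finset.sum_congr rfl fun j _ => ?_
    rw [hP, h.root.prod_eq hn, mul_pow, map_mul, aeval_C, map_pow, aeval_X, Algebra.smul_def,
      map_mul]
    simp only [map_pow, map_neg, map_one]
    ring
  have h4 := congrArg (fun p => coeff p (j : ℕ)) h3
  simp only [finsetSum_coeff, coeff_C_mul_X_pow, coeff_zero] at h4
  rw [Fintype.sum_eq_single j (fun l hl => by
    rw [if_neg]; exact fun h => hl (Fin.ext h.symm)), if_pos rfl] at h4
  rcases mul_eq_zero.1 h4 with h5 | h5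
  · exact h5
  · exact absurd h5 (pow_ne_zero _ (pow_ne_zero _ (neg_ne_zero.2 one_ne_zero)))

/-! ### Deforming a root along the base -/

/-- The properties shared by the degree functions `natDegree` and `totalDegree`. -/
structure IsDegreeFn {R : Type*} [CommRing R] (δ : R → ℕ) : Prop where
  zero : δ 0 = 0
  one : δ 1 = 0
  add : ∀ a b, δ (a + b) ≤ max (δ a) (δ b)
  mul : ∀ a b, δ (a * b) ≤ δ a + δ b

/-- The coefficient of `X ^ m` in `Q` has degree at most `w * m + d`. -/
def WeightLE {R : Type*} [CommRing R] (δ : R → ℕ) (w d : ℕ) (Q : R[X]) : Prop :=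
  ∀ m, δ (Q.coeff m) ≤ w * m + d

theorem isDegreeFn_natDegree (k : Type*) [CommRing k] :
    IsDegreeFn (natDegree : k[X] → ℕ) where
  zero := natDegree_zero
  one := natDegree_one
  add := natDegree_add_le
  mul _ _ := natDegree_mul_le

theorem isDegreeFn_totalDegree (σ k : Type*) [CommRing k] :
    IsDegreeFn (MvPolynomial.totalDegree : MvPolynomial σ k → ℕ) where
  zero := MvPolynomial.totalDegree_zero
  one := MvPolynomial.totalDegree_one
  add := MvPolynomial.totalDegree_add
  mul := MvPolynomial.totalDegree_mul

theorem IsDegreeFn.sum {R : Type*} [CommRing R] {δ : R → ℕ} (hδ : IsDegreeFn δ) {ι : Type*}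
    (s : Finset ι) (f : ι → R) {d : ℕ} (h : ∀ i ∈ s, δ (f i) ≤ d) : δ (∑ i ∈ s, f i) ≤ d := by
  classical
  induction s using Finset.induction_on with
  | empty => simp [hδ.zero]
  | insert a s ha ih =>
    rw [Finset.sum_insert ha]
    exact (hδ.add _ _).trans (max_le (h _ (by simp)) (ih fun i hi => h i (by simp [hi])))

theorem WeightLE.mul {R : Type*} [CommRing R] {δ : R → ℕ} (hδ : IsDegreeFn δ) {w d e : ℕ}
    {P Q : R[X]} (hP : WeightLE δ w d P) (hQ : WeightLE δ w e Q) :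
    WeightLE δ w (d + e) (P * Q) := by
  intro m
  rw [coeff_mul]
  refine hδ.sum _ _ fun i hi => ?_
  have := Finset.HasAntidiagonal.mem_antidiagonal.1 hi
  have h1 := hP i.1
  have h2 := hQ i.2
  have h3 := hδ.mul (P.coeff i.1) (Q.coeff i.2)
  rw [← this, mul_add]
  omega

theorem WeightLE.add {R : Type*} [CommRing R] {δ : R → ℕ} (hδ : IsDegreeFn δ) {w d : ℕ}
    {P Q : R[X]} (hP : WeightLE δ w d P) (hQ : WeightLE δ w d Q) :
    WeightLE δ w d (P + Q) := by
  intro m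
  rw [coeff_add]
  exact (hδ.add _ _).trans (max_le (hP m) (hQ m))

theorem WeightLE.sum {R : Type*} [CommRing R] {δ : R → ℕ} (hδ : IsDegreeFn δ) {w d : ℕ}
    {ι : Type*} (s : Finset ι) (f : ι → R[X]) (h : ∀ i ∈ s, WeightLE δ w d (f i)) :
    WeightLE δ w d (∑ i ∈ s, f i) := by
  intro m
  rw [finsetSum_coeff]
  exact hδ.sum _ _ fun i hi => h i hi m

theorem WeightLE.mono {R : Type*} [CommRing R] {δ : R → ℕ} {w d e : ℕ} {P : R[X]}
    (hP : WeightLE δ w d P) (h : d ≤ e) : WeightLE δ w e P := fun m =>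
  (hP m).trans (by omega)

theorem weightLE_C {R : Type*} [CommRing R] {δ : R → ℕ} (hδ : IsDegreeFn δ) {w d : ℕ}
    {c : R} (h : δ c ≤ d) : WeightLE δ w d (C c) := by
  intro m
  rw [coeff_C]
  split_ifs
  · omega
  · rw [hδ.zero]; omega

theorem weightLE_C_mul_X_pow {R : Type*} [CommRing R] {δ : R → ℕ} (hδ : IsDegreeFn δ) {w d j : ℕ}
    {c : R} (h : δ c ≤ w * j + d) : WeightLE δ w d (C c * X ^ j) := by
  intro m
  rw [coeff_C_mul_X_pow]
  split_ifs with hm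
  · rw [hm]; exact h
  · rw [hδ.zero]; omega

theorem WeightLE.pow {R : Type*} [CommRing R] {δ : R → ℕ} (hδ : IsDegreeFn δ) {w d : ℕ}
    {P : R[X]} (hP : WeightLE δ w d P) (j : ℕ) : WeightLE δ w (j * d) (P ^ j) := by
  induction j with
  | zero => rw [pow_zero, ← C_1]; exact weightLE_C hδ (by rw [hδ.one]; omega)
  | succ j ih =>
    rw [pow_succ]
    exact (ih.mul hδ hP).mono (by ring_nf; omega)

theorem WeightLE.prod {R : Type*} [CommRing R] {δ : R → ℕ} (hδ : IsDegreeFn δ) {w : ℕ}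
    {ι : Type*} (s : Finset ι) (f : ι → R[X]) (d : ι → ℕ) (h : ∀ i ∈ s, WeightLE δ w (d i) (f i)) :
    WeightLE δ w (∑ i ∈ s, d i) (∏ i ∈ s, f i) := by
  classical
  induction s using Finset.induction_on with
  | empty =>
    rw [Finset.prod_empty, ← C_1]; exact weightLE_C hδ (by rw [hδ.one]; omega)
  | insert a s ha ih =>
    rw [Finset.sum_insert ha, Finset.prod_insert ha]
    exact (h _ (by simp)).mul hδ (ih fun i hi => h i (by simp [hi]))

theorem taylor_expand {k : Type*} [CommRing k] (f : k[X]) {n : ℕ} (hf : f.natDegree ≤ n)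
    (W : k[X][X]) :
    aeval (C X + W) f = ∑ j ∈ Finset.range (n + 1), C (hasseDeriv j f) * W ^ j := by
  have hmap : ∀ j, hasseDeriv j (f.map C) = (hasseDeriv j f).map C := by
    intro j; ext1 m
    rw [hasseDeriv_coeff, coeff_map, coeff_map, hasseDeriv_coeff]
    simp
  have h1 : aeval W (taylor X (f.map C)) = aeval (C X + W) f := by
    rw [taylor_apply, aeval_comp, map_add, aeval_X, aeval_C, ← Polynomial.algebraMap_eq (R := k),
      aeval_map_algebraMap, add_comm]
    rfl
  rw [← h1, aeval_eq_sum_range' (n := n + 1)]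
  · refine Finset.sum_congr rfl fun j _ => ?_
    rw [taylor_coeff, hmap, eval_map, eval₂_C_X, smul_eq_C_mul]
  · rw [natDegree_taylor]
    exact lt_of_le_of_lt (natDegree_map_le) (by omega)

/-- A root `x` over `t` is deformed to a root `θ(x, h)` over `t + e(x) * h`, up to order `h ^ K`, by a
polynomial `θ` whose coefficient of `h ^ m` has degree at most `2 * n * m + 1` in `x`. Here `h` is
the outer variable. With `g` the derivative of `f`, `e = g ^ 2 * G` and `θ = x + g * G * h * v`, the
Taylor formula turns the equation into `v + Φ v = 1`, where `Φ` is divisible by `h`; this is solved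
by iterating `v ↦ 1 - Φ v`. The factor `g ^ 2` in `e` is what avoids dividing by `g`. -/
theorem exists_flow {k : Type*} [CommRing k] {n : ℕ} (hn : 2 ≤ n) (f G e : k[X])
    (hf : f.natDegree ≤ n) (hG : G.natDegree ≤ n + 2) (he : derivative f ^ 2 * G = e) (K : ℕ) :
    ∃ θ : k[X][X], θ.coeff 0 = X ∧ WeightLE natDegree (2 * n) 1 θ ∧
      X ^ K ∣ aeval θ f - (C f + C e * X) := by
  have hδ := isDegreeFn_natDegree k
  set A : ℕ → k[X] := fun j => hasseDeriv (j + 2) f * derivative f ^ j * G ^ (j + 1) with hA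
  have hdA : ∀ j ∈ Finset.range (n - 1), (A j).natDegree ≤ 2 * n * (j + 1) + 0 := by
    intro j hj
    have hj := Finset.mem_range.1 hj
    have h1 : (hasseDeriv (j + 2) f).natDegree ≤ n - (j + 2) :=
      (natDegree_hasseDeriv_le f (j + 2)).trans (by omega)
    have h2 : (derivative f ^ j).natDegree ≤ j * (n - 1) :=
      natDegree_pow_le_of_le j ((natDegree_derivative_le f).trans (by omega))
    have h3 : (G ^ (j + 1)).natDegree ≤ (j + 1) * (n + 2) := natDegree_pow_le_of_le _ hG
    refine (natDegree_mul_le_of_le (natDegree_mul_le_of_le h1 h2) h3).trans ?_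
    obtain ⟨m, rfl⟩ : ∃ m, n = m + (j + 2) := ⟨n - (j + 2), by omega⟩
    rw [show m + (j + 2) - (j + 2) = m by omega, show m + (j + 2) - 1 = m + j + 1 by omega]
    nlinarith
  set Φ : k[X][X] → k[X][X] := fun v => ∑ j ∈ Finset.range (n - 1),
    (C (A j) * X ^ (j + 1)) * v ^ (j + 2) with hΦ
  have hiter : ∀ r : ℕ, ∃ v : k[X][X], WeightLE natDegree (2 * n) 0 v ∧ X ^ r ∣ v + Φ v - 1 := by
    intro r
    induction r with
    | zero => exact ⟨0, by rw [← C_0]; exact weightLE_C hδ (by simp), by simp⟩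
    | succ r ih =>
      obtain ⟨v, hv, hr⟩ := ih
      refine ⟨1 - Φ v, ?_, ?_⟩
      · have hΦv : WeightLE natDegree (2 * n) 0 (Φ v) := by
          refine WeightLE.sum hδ _ _ fun j hj => ?_
          have := (weightLE_C_mul_X_pow hδ (hdA j hj)).mul hδ (hv.pow hδ (j + 2))
          simpa using this
        intro m
        rw [coeff_sub]
        refine (natDegree_sub_le _ _).trans (max_le ?_ (hΦv m))
        rw [← C_1]
        exact weightLE_C (w := 2 * n) (d := 0) hδ (by simp) m
      · have e1 : 1 - Φ v + Φ (1 - Φ v) - 1 = Φ (1 - Φ v) - Φ v := by ring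
        rw [e1, hΦ]
        simp only
        rw [← Finset.sum_sub_distrib]
        refine Finset.dvd_sum fun j _ => ?_
        rw [← mul_sub, pow_succ']
        have h2 : X ^ r ∣ (1 - Φ v) ^ (j + 2) - v ^ (j + 2) := by
          refine dvd_trans ?_ (sub_dvd_pow_sub_pow _ _ _)
          rw [show 1 - Φ v - v = -(v + Φ v - 1) by ring]
          exact (dvd_neg).2 hr
        refine mul_dvd_mul ?_ h2
        exact Dvd.dvd.mul_left (dvd_pow_self _ (by omega)) _
  obtain ⟨v, hv, hr⟩ := hiter K
  refine ⟨C X + C (derivative f * G) * X * v, by simp, ?_, ?_⟩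
  · refine WeightLE.add hδ (weightLE_C hδ natDegree_X_le) ?_
    have h1 : WeightLE natDegree (2 * n) 1 (C (derivative f * G) * X) := by
      have := weightLE_C_mul_X_pow hδ (w := 2 * n) (d := 1) (j := 1) (c := derivative f * G)
        ((natDegree_mul_le_of_le ((natDegree_derivative_le f).trans (Nat.sub_le_sub_right hf 1))
          hG).trans (by omega))
      simpa using this
    simpa using h1.mul hδ hv
  · rw [taylor_expand f hf, show n + 1 = (n - 1) + 2 by omega, Finset.sum_range_succ',
      Finset.sum_range_succ', hasseDeriv_zero', zero_add, hasseDeriv_one', pow_one, pow_zero, mul_one]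
    have e1 : ∀ j ∈ Finset.range (n - 1), C (hasseDeriv (j + 1 + 1) f) *
        (C (derivative f * G) * X * v) ^ (j + 1 + 1) =
        C e * X * ((C (A j) * X ^ (j + 1)) * v ^ (j + 2)) := by
      intro j _
      rw [hA, ← he]
      simp only [map_mul, map_pow]
      ring
    rw [Finset.sum_congr rfl e1, ← Finset.mul_sum]
    have e2 : C e * X * Φ v + C (derivative f) * (C (derivative f * G) * X * v) + C f -
        (C f + C e * X) = C e * X * (v + Φ v - 1) := by
      rw [← he]; simp only [map_mul, map_pow]; ring
    change _ ∣ C e * X * Φ v + _ + _ - _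
    rw [e2]
    exact hr.mul_left _

/-! ### The linear system for the auxiliary function -/

/-- The deformation `θ` of the `l`-th root. -/
noncomputable def flowVar {k : Type*} [CommRing k] {n : ℕ} (θ : k[X][X]) (l : Fin n) :
    (MvPolynomial (Fin n) k)[X] :=
  θ.map (aeval (R := k) (MvPolynomial.X l : MvPolynomial (Fin n) k)).toRingHom

/-- A staircase monomial in the deformed roots. -/
noncomputable def flowMon {k : Type*} [CommRing k] {n a : ℕ} (θ : k[X][X]) (i : StairIdx n a) :
    (MvPolynomial (Fin n) k)[X] :=
  MvPolynomial.aeval (flowVar θ) (stairMon k i)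

theorem weightLE_flowVar {k : Type*} [CommRing k] {n w : ℕ} {θ : k[X][X]}
    (hθ : WeightLE natDegree w 1 θ) (l : Fin n) :
    WeightLE MvPolynomial.totalDegree w 1 (flowVar θ l) := by
  intro m
  refine le_trans ?_ (hθ m)
  rw [flowVar, coeff_map]
  change (aeval (MvPolynomial.X l : MvPolynomial (Fin n) k) (θ.coeff m)).totalDegree ≤ _
  rw [aeval_eq_sum_range]
  refine (isDegreeFn_totalDegree _ _).sum _ _ fun j hj => ?_
  have hj := Finset.mem_range.1 hj
  refine (MvPolynomial.totalDegree_smul_le _ _).trans ?_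
  rcases subsingleton_or_nontrivial k with h | h
  · rw [Subsingleton.elim (MvPolynomial.X (R := k) l ^ _) 0]; simp
  · rw [MvPolynomial.totalDegree_X_pow]; omega

theorem weightLE_flowMon {k : Type*} [CommRing k] {n a w : ℕ} {θ : k[X][X]}
    (hθ : WeightLE natDegree w 1 θ) (i : StairIdx n a) :
    WeightLE MvPolynomial.totalDegree w (n * (a - 1) + n * (n - 1) / 2) (flowMon θ i) := by
  have hδ := isDegreeFn_totalDegree (Fin n) k
  rw [flowMon, stairMon, map_prod]
  refine WeightLE.mono (WeightLE.prod hδ _ _ (fun l => ((i.1 l : ℕ) + (i.2 : ℕ)) * 1)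
    fun l _ => ?_) ?_
  · rw [map_pow, MvPolynomial.aeval_X]
    exact (weightLE_flowVar hθ l).pow hδ _
  · simpa using sum_stairIdx_le i

theorem map_flowMon {k : Type*} [CommRing k] {n a : ℕ} (θ : k[X][X]) (i : StairIdx n a)
    (η : Fin n → k) :
    (flowMon θ i).map (MvPolynomial.aeval (R := k) η).toRingHom =
      MvPolynomial.aeval (fun l => θ.map (evalRingHom (η l))) (stairMon k i) := by
  have h1 : ∀ l, (flowVar θ l).map (MvPolynomial.aeval (R := k) η).toRingHom =
      θ.map (evalRingHom (η l)) := by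
    intro l
    rw [flowVar, Polynomial.map_map]
    congr 1
    ext <;> simp
  rw [flowMon, stairMon, map_prod, map_prod, Polynomial.map_prod]
  refine Finset.prod_congr rfl fun l _ => ?_
  rw [map_pow, map_pow, MvPolynomial.aeval_X, MvPolynomial.aeval_X, Polynomial.map_pow, h1]

/-- If `hcount` holds, there are nontrivial `c` for which the first `M` coefficients, with respect to
the deformation parameter, of `∑ c i j * s i(θ) * s j(x ∘ σ)` vanish on the curve, for each `σ ∈ A`.
By the order bound, the vanishing of the `m`-th one follows from that of its first
`(n - 1)! * (D + 2 * n * m) + 1` power series coefficients at the base point. -/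
theorem IsBasePoint.exists_coefficients {k : Type*} [Field k] {n : ℕ} (hn : 2 ≤ n)
    {y : Fin n → PowerSeries k} {tc : k} {p q : Fin n} (h : IsBasePoint y tc p q)
    {θ : k[X][X]} (hθ : WeightLE natDegree (2 * n) 1 θ) (a b M : ℕ)
    (A : Finset (Equiv.Perm (Fin n))) (D : ℕ)
    (hD : (n * (a - 1) + n * (n - 1) / 2) + (n * (b - 1) + n * (n - 1) / 2) ≤ D)
    (hcount : A.card * ∑ m : Fin M, ((n - 1).factorial * (D + 2 * n * m) + 1) <
      (n.factorial * a) * (n.factorial * b)) :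
    ∃ c : StairIdx n a × StairIdx n b → k, c ≠ 0 ∧ ∀ σ ∈ A, ∀ m < M,
      MvPolynomial.aeval y (∑ ij : StairIdx n a × StairIdx n b,
        c ij • ((flowMon θ ij.1).coeff m * MvPolynomial.rename σ (stairMon k ij.2))) = 0 := by
  classical
  set B : Equiv.Perm (Fin n) → ℕ → StairIdx n a × StairIdx n b → MvPolynomial (Fin n) k :=
    fun σ m ij => (flowMon θ ij.1).coeff m * MvPolynomial.rename σ (stairMon k ij.2) with hB
  set r : ℕ → ℕ := fun m => (n - 1).factorial * (D + 2 * n * m) + 1 with hr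
  let ι := Σ x : A × Fin M, Fin (r x.2)
  let L : (StairIdx n a × StairIdx n b → k) →ₗ[k] (ι → k) :=
    LinearMap.pi fun x => (PowerSeries.coeff (x.2 : ℕ)).comp
      ((MvPolynomial.aeval y).toLinearMap.comp
        (Fintype.linearCombination k (B x.1.1 x.1.2)))
  have hL : ∀ c (x : ι), L c x = PowerSeries.coeff (x.2 : ℕ)
      (MvPolynomial.aeval y (∑ ij, c ij • B x.1.1 x.1.2 ij)) := by
    intro c x
    simp [L, Fintype.linearCombination_apply]
  have hfin : Module.finrank k (ι → k) <
      Module.finrank k (StairIdx n a × StairIdx n b → k) := by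
    rw [Module.finrank_fintype_fun_eq_card, Module.finrank_fintype_fun_eq_card, Fintype.card_prod,
      card_stairIdx, card_stairIdx]
    refine lt_of_eq_of_lt ?_ hcount
    rw [Fintype.card_sigma]
    simp only [Fintype.card_fin]
    rw [Fintype.sum_prod_type]
    simp [hr]
  obtain ⟨c, hc, hc0⟩ := (Submodule.ne_bot_iff _).1 (LinearMap.ker_ne_bot_of_finrank_lt (f := L) hfin)
  refine ⟨c, hc0, fun σ hσ m hm => ?_⟩
  refine h.eq_zero_of_X_pow_dvd hn _ (D := D + 2 * n * m) ?_ ?_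
  · refine (isDegreeFn_totalDegree _ _).sum _ _ fun ij _ => ?_
    refine (MvPolynomial.totalDegree_smul_le _ _).trans ((MvPolynomial.totalDegree_mul _ _).trans ?_)
    have h1 := weightLE_flowMon hθ ij.1 m
    have h2 := (MvPolynomial.totalDegree_rename_le σ (stairMon k ij.2)).trans
      (totalDegree_stairMon k ij.2)
    omega
  · rw [PowerSeries.X_pow_dvd_iff]
    intro s hs
    have h1 := congrFun (LinearMap.mem_ker.1 hc) ⟨(⟨σ, hσ⟩, ⟨m, hm⟩), ⟨s, hs⟩⟩
    rw [hL] at h1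
    exact h1

/-! ### Nonvanishing of the auxiliary function -/

/-- Let `V` be a space of power series in which no nonzero element is divisible by `X ^ q`, `q = p ^ e`.
A relation `∑ S j * τ j ^ q = 0` with all `S j` in `V` then holds coefficient by coefficient in the
`τ j`: modulo `X ^ q` only the constant coefficients of the `τ j` matter, and one proceeds by
dividing the `τ j` by `X`. -/
theorem sum_pow_mul_eq_zero {k : Type*} [Field k] {p e : ℕ} [Fact p.Prime] [CharP k p]
    {J : Type*} [Fintype J] (V : Submodule k (PowerSeries k))
    (hV : ∀ v ∈ V, PowerSeries.X ^ (p ^ e) ∣ v → v = 0) (S : J → PowerSeries k)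
    (hS : ∀ j, S j ∈ V) (m : ℕ) : ∀ (τ : J → PowerSeries k) (_ : ∑ j, S j * τ j ^ (p ^ e) = 0),
      ∑ j, (PowerSeries.coeff m (τ j)) ^ (p ^ e) • S j = 0 := by
  have hchar : CharP (PowerSeries k) p := charP_of_injective_algebraMap
    (FaithfulSMul.algebraMap_injective k (PowerSeries k)) p
  have hstep : ∀ (τ : J → PowerSeries k) (_ : ∑ j, S j * τ j ^ (p ^ e) = 0),
      ∑ j, (PowerSeries.coeff 0 (τ j)) ^ (p ^ e) • S j = 0 ∧
      ∃ τ' : J → PowerSeries k, ∑ j, S j * τ' j ^ (p ^ e) = 0 ∧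
        ∀ j m, PowerSeries.coeff (m + 1) (τ j) = PowerSeries.coeff m (τ' j) := by
    intro τ hτ
    have hex : ∀ j, ∃ t, τ j = PowerSeries.C (PowerSeries.coeff 0 (τ j)) + PowerSeries.X * t := by
      intro j
      obtain ⟨t, ht⟩ : PowerSeries.X ∣ τ j - PowerSeries.C (PowerSeries.coeff 0 (τ j)) := by
        rw [PowerSeries.X_dvd_iff]; simp
      exact ⟨t, by rw [← ht]; ring⟩
    choose τ' hτ' using hex
    have h1 : ∑ j, (PowerSeries.coeff 0 (τ j)) ^ (p ^ e) • S j +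
        PowerSeries.X ^ (p ^ e) * ∑ j, S j * τ' j ^ (p ^ e) = 0 := by
      rw [← hτ, Finset.mul_sum, ← Finset.sum_add_distrib]
      refine Finset.sum_congr rfl fun j _ => ?_
      conv_rhs => rw [hτ' j, add_pow_char_pow, mul_pow, ← map_pow]
      rw [PowerSeries.smul_eq_C_mul]
      ring
    have h0 : ∑ j, (PowerSeries.coeff 0 (τ j)) ^ (p ^ e) • S j = 0 := by
      refine hV _ (V.sum_mem fun j _ => V.smul_mem _ (hS j)) ?_
      rw [eq_neg_of_add_eq_zero_left h1]
      exact (dvd_mul_right _ _).neg_right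
    refine ⟨h0, τ', ?_, fun j m => ?_⟩
    · rw [h0, zero_add] at h1
      exact (mul_eq_zero.1 h1).resolve_left (pow_ne_zero _ PowerSeries.X_ne_zero)
    · conv_lhs => rw [hτ' j]
      rw [map_add, PowerSeries.coeff_succ_X_mul, PowerSeries.coeff_C, if_neg (by omega), zero_add]
  induction m with
  | zero => exact fun τ hτ => (hstep τ hτ).1
  | succ m ih =>
    intro τ hτ
    obtain ⟨-, ρ, hρ, hc⟩ := hstep τ hτ
    simp only [hc]
    exact ih ρ hρ

/-- The auxiliary function is nonzero for nontrivial `c`: `sum_pow_mul_eq_zero` separates off the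
`q`-th powers, and extracting `q`-th roots of the coefficients leads to two applications of the
independence of the staircase monomials. -/
theorem IsBasePoint.aux_ne_zero {k : Type*} [Field k] [IsAlgClosed k] {p e : ℕ} [Fact p.Prime]
    [CharP k p] {n : ℕ} (hn : 2 ≤ n)
    {y : Fin n → PowerSeries k} {tc : k} {u v : Fin n} (h : IsBasePoint y tc u v) {a b : ℕ}
    (hq : (n - 1).factorial * (n * (a - 1) + n * (n - 1) / 2) < p ^ e)
    (c : StairIdx n a × StairIdx n b → k) (hc : c ≠ 0) :
    MvPolynomial.aeval y (∑ ij : StairIdx n a × StairIdx n b,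
        c ij • (stairMon k ij.1 * stairMon k ij.2 ^ (p ^ e))) ≠ 0 := by
  intro h0
  apply hc
  set d := n * (a - 1) + n * (n - 1) / 2 with hd
  set V : Submodule k (PowerSeries k) :=
    (MvPolynomial.restrictTotalDegree (Fin n) k d).map (MvPolynomial.aeval y).toLinearMap with hV
  have hVX : ∀ v ∈ V, PowerSeries.X ^ (p ^ e) ∣ v → v = 0 := by
    rintro _ ⟨S, hS, rfl⟩ hdvd
    refine h.eq_zero_of_X_pow_dvd hn S (D := d) ?_ ((pow_dvd_pow _ hq).trans hdvd)
    exact (MvPolynomial.mem_restrictTotalDegree _ _ _).1 hS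
  set S : StairIdx n b → PowerSeries k := fun j => ∑ i, c (i, j) •
    MvPolynomial.aeval y (stairMon k i) with hSdef
  have hS : ∀ j, S j ∈ V := by
    intro j
    rw [hSdef]
    refine Submodule.sum_mem V fun i _ => V.smul_mem _ ?_
    exact ⟨stairMon k i, (MvPolynomial.mem_restrictTotalDegree _ _ _).2 (totalDegree_stairMon k i),
      rfl⟩
  have h1 : ∑ j, S j * (MvPolynomial.aeval y (stairMon k j)) ^ (p ^ e) = 0 := by
    rw [map_sum, Fintype.sum_prod_type, Finset.sum_comm] at h0
    refine Eq.trans (Finset.sum_congr rfl fun j _ => ?_) h0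
    rw [hSdef, Finset.sum_mul]
    refine Finset.sum_congr rfl fun i _ => ?_
    simp
  have hS0 : ∀ j, S j = 0 := by
    intro j
    ext s
    rw [map_zero]
    have hroot : ∀ j, ∃ ρ : k, ρ ^ (p ^ e) = PowerSeries.coeff s (S j) := fun j =>
      IsAlgClosed.exists_pow_nat_eq _ (pow_pos (Fact.out : p.Prime).pos e)
    choose ρ hρ using hroot
    have h2 : ρ = 0 := by
      apply h.stair_independent hn
      ext m
      have h3 := congrArg (PowerSeries.coeff s) (sum_pow_mul_eq_zero V hVX S hS m _ h1)
      rw [map_sum, map_zero] at h3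
      simp only [PowerSeries.coeff_smul, smul_eq_mul, ← hρ, ← mul_pow] at h3
      rw [← sum_pow_char_pow] at h3
      rw [map_sum, map_zero]
      have := eq_zero_of_pow_eq_zero h3
      rw [← this]
      refine Finset.sum_congr rfl fun j _ => ?_
      rw [PowerSeries.coeff_smul, smul_eq_mul, mul_comm]
    rw [← hρ, h2, Pi.zero_apply, zero_pow (pow_pos (Fact.out : p.Prime).pos e).ne']
  ext ⟨i, j⟩
  have := h.stair_independent hn (fun i => c (i, j)) (hS0 j)
  exact congrFun this i

/-! ### Vanishing of the norm at a fibre -/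

/-- If the Frobenius acts on the fibre `η` as `σ`, then modulo `h ^ q` the `q`-th power of a monomial
in the deformed roots is that monomial at `η ∘ σ`. So under the linear conditions `hvan` the
auxiliary function vanishes along the deformation of `η` to order `M`. -/
theorem X_pow_dvd_aeval_flow {k : Type*} [Field k] {p e : ℕ} [Fact p.Prime]
    [CharP k p] {n a b M : ℕ} {θ : k[X][X]} (hθ0 : θ.coeff 0 = X)
    (c : StairIdx n a × StairIdx n b → k) {η : Fin n → k} {σ : Equiv.Perm (Fin n)}
    (hσ : ∀ l, η l ^ (p ^ e) = η (σ l)) (hM : M ≤ p ^ e)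
    (hvan : ∀ m < M, MvPolynomial.aeval η (∑ ij : StairIdx n a × StairIdx n b,
        c ij • ((flowMon θ ij.1).coeff m * MvPolynomial.rename σ (stairMon k ij.2))) = 0) :
    X ^ M ∣ MvPolynomial.aeval (fun l => θ.map (evalRingHom (η l)))
      (∑ ij : StairIdx n a × StairIdx n b,
        c ij • (stairMon k ij.1 * stairMon k ij.2 ^ (p ^ e))) := by
  set w : Fin n → k[X] := fun l => θ.map (evalRingHom (η l)) with hw
  have hw0 : ∀ l, (w l).coeff 0 = η l := by
    intro l
    simp [hw, coeff_map, hθ0]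
  have hfrob : ∀ j : StairIdx n b, (MvPolynomial.aeval η (stairMon k j)) ^ (p ^ e) =
      MvPolynomial.aeval (η ∘ σ) (stairMon k j) := by
    intro j
    simp only [stairMon, map_prod, map_pow, MvPolynomial.aeval_X, ← Finset.prod_pow,
      Function.comp_apply, ← hσ, ← pow_mul]
    exact Finset.prod_congr rfl fun l _ => by rw [mul_comm]
  have hmon : ∀ j : StairIdx n b, X ^ M ∣ (MvPolynomial.aeval w (stairMon k j)) ^ (p ^ e) -
      C (MvPolynomial.aeval (η ∘ σ) (stairMon k j)) := by
    intro j
    rw [← hfrob, map_pow, ← sub_pow_char_pow]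
    refine (pow_dvd_pow _ hM).trans (pow_dvd_pow_of_dvd ?_ _)
    rw [X_dvd_iff, coeff_sub, coeff_C_zero, coeff_zero_eq_eval_zero]
    simp only [stairMon, map_prod, map_pow, MvPolynomial.aeval_X, eval_prod, eval_pow,
      ← coeff_zero_eq_eval_zero, hw0, sub_self]
  have hmain : X ^ M ∣ ∑ ij : StairIdx n a × StairIdx n b, c ij •
      (MvPolynomial.aeval w (stairMon k ij.1) *
        C (MvPolynomial.aeval (η ∘ σ) (stairMon k ij.2))) := by
    rw [X_pow_dvd_iff]
    intro m hm
    have h1 := hvan m hm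
    rw [map_sum] at h1
    rw [finsetSum_coeff, ← h1]
    refine Finset.sum_congr rfl fun ij _ => ?_
    rw [map_smul, map_mul, MvPolynomial.aeval_rename, coeff_smul, coeff_mul_C, hw, ← map_flowMon,
      coeff_map]
    rfl
  rw [map_sum, ← dvd_sub_left hmain, ← Finset.sum_sub_distrib]
  refine Finset.dvd_sum fun ij _ => ?_
  rw [map_smul, ← smul_sub, map_mul, map_pow, ← mul_sub, smul_eq_C_mul]
  exact ((hmon ij.2).mul_left _).mul_left _

/-- The deformations of the distinct roots over `t` are the roots over `t + ε * h` in `k[h] / (h ^ K)`.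
Their differences are units, so the corresponding linear factors of `f - (t + ε * h)` are pairwise
coprime and their product divides it. -/
theorem rootTuple_flow {k : Type*} [Field k] {n K : ℕ} (hn : 2 ≤ n) (hK : K ≠ 0) {θ : k[X][X]}
    (hθ0 : θ.coeff 0 = X) {ε : k} {t : k} {e : k[X]}
    (hθ : X ^ K ∣ aeval θ (X ^ n - X ^ (n - 1) : k[X]) -
      (C (X ^ n - X ^ (n - 1)) + C e * X))
    {η : Fin n → k} (hη : Function.Injective η) (hroot : RootTuple η t)
    (he : ∀ l, e.eval (η l) = ε) :
    RootTuple (fun l => Ideal.Quotient.mk (Ideal.span {(X : k[X]) ^ K})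
      (θ.map (evalRingHom (η l)))) (Ideal.Quotient.mk _ (C t + C ε * X)) := by
  have hnu : ¬ IsUnit ((X : k[X]) ^ K) := by
    rw [isUnit_pow_iff hK]; exact not_isUnit_X
  have : Nontrivial (k[X] ⧸ Ideal.span {(X : k[X]) ^ K}) := by
    rw [Ideal.Quotient.nontrivial_iff, Ne, Ideal.span_singleton_eq_top]; exact hnu
  set w : Fin n → k[X] := fun l => θ.map (evalRingHom (η l)) with hw
  have hw0 : ∀ l, (w l).coeff 0 = η l := by
    intro l
    simp [hw, coeff_map, hθ0]
  apply rootTuple_of_dvd hn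
  apply Finset.prod_dvd_of_coprime
  · intro i _ j _ hij
    apply isCoprime_X_sub_C_of_isUnit_sub
    rw [← map_sub]
    have hcop : IsCoprime (w i - w j) ((X : k[X]) ^ K) := by
      apply IsCoprime.pow_right
      rw [isCoprime_comm, Irreducible.coprime_iff_not_dvd irreducible_X, X_dvd_iff, coeff_sub, hw0, hw0,
        sub_eq_zero]
      exact fun h => hij (hη h)
    obtain ⟨r, s, hrs⟩ := hcop
    refine IsUnit.of_mul_eq_one (Ideal.Quotient.mk _ r) ?_
    rw [← map_mul, ← map_one (Ideal.Quotient.mk _), Ideal.Quotient.eq, Ideal.mem_span_singleton]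
    exact ⟨-s, by linear_combination hrs⟩
  · intro l _
    rw [dvd_iff_isRoot, IsRoot]
    simp only [eval_sub, eval_pow, eval_X, eval_C, ← map_pow, ← map_sub]
    rw [Ideal.Quotient.eq_zero_iff_mem, Ideal.mem_span_singleton]
    have h1 := map_dvd (mapRingHom (evalRingHom (η l))) hθ
    have h2 := hroot.pow_eq l
    simp only [map_sub, map_add, map_mul, map_pow, aeval_X, coe_mapRingHom, map_X, map_C, coe_evalRingHom,
      eval_X, he] at h1
    convert h1 using 1
    simp only [← h2, map_sub, map_pow]

theorem X_sub_C_pow_dvd {k : Type*} [Field k] {K : ℕ} {N : k[X]} {t ε : k} (hε : ε ≠ 0)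
    (h : X ^ K ∣ N.comp (C t + C ε * X)) : (X - C t) ^ K ∣ N := by
  obtain ⟨Q, hQ⟩ := h
  have h1 := congrArg (fun P => P.comp (C ε⁻¹ * (X - C t))) hQ
  simp only [comp_assoc, mul_comp, X_pow_comp, add_comp, C_comp, X_comp, ← mul_assoc, ← C_mul,
    mul_inv_cancel₀ hε, C_1, one_mul, add_sub_cancel, comp_X] at h1
  rw [h1, mul_pow]
  exact ((dvd_mul_left _ _)).mul_right _

/-- If `Ψ` vanishes to order `M` along the deformations of all orderings of the fibre over `t`, then
its norm `N`, evaluated at `t + ε * h`, is divisible by `h ^ (M * n!)`; so `N` has a zero of order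
`M * n!` at `t`. -/
theorem multiplicity_norm {k : Type*} [Field k] {n M : ℕ} (hn : 2 ≤ n) (hM : M ≠ 0)
    {θ : k[X][X]} (hθ0 : θ.coeff 0 = X) {ε : k} {t : k} {e : k[X]}
    (hθ : X ^ (M * n.factorial) ∣ aeval θ (X ^ n - X ^ (n - 1) : k[X]) -
      (C (X ^ n - X ^ (n - 1)) + C e * X))
    {η : Fin n → k} (hη : Function.Injective η) (hroot : RootTuple η t)
    (he : ∀ l, e.eval (η l) = ε) (hε : ε ≠ 0) {Ψ : MvPolynomial (Fin n) k} {N : k[X]}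
    (hN : ∀ (w : Fin n → k[X] ⧸ Ideal.span {(X : k[X]) ^ (M * n.factorial)}) τ, RootTuple w τ →
      ∏ π : Equiv.Perm (Fin n), MvPolynomial.aeval (w ∘ π) Ψ = aeval τ N)
    (hΨ : ∀ π : Equiv.Perm (Fin n),
      X ^ M ∣ MvPolynomial.aeval (fun l => θ.map (evalRingHom (η (π l)))) Ψ) :
    (X - C t) ^ (M * n.factorial) ∣ N := by
  apply X_sub_C_pow_dvd hε
  have hroot' := rootTuple_flow hn (mul_ne_zero hM (Nat.factorial_ne_zero n)) hθ0 hθ hη hroot he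
  have h1 := hN _ _ hroot'
  have h2 : ∀ π : Equiv.Perm (Fin n), MvPolynomial.aeval
      ((fun l => Ideal.Quotient.mk (Ideal.span {(X : k[X]) ^ (M * n.factorial)})
        (θ.map (evalRingHom (η l)))) ∘ π) Ψ =
      Ideal.Quotient.mk _ (MvPolynomial.aeval (fun l => θ.map (evalRingHom (η (π l)))) Ψ) := by
    intro π
    have := MvPolynomial.comp_aeval_apply (R := k) (fun l => θ.map (evalRingHom (η (π l))))
      (Ideal.Quotient.mkₐ k (Ideal.span {(X : k[X]) ^ (M * n.factorial)})) Ψ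
    exact this.symm
  have h3 : aeval (Ideal.Quotient.mk (Ideal.span {(X : k[X]) ^ (M * n.factorial)})
      (C t + C ε * X)) N = Ideal.Quotient.mk _ (N.comp (C t + C ε * X)) := by
    have := aeval_algHom_apply
      (Ideal.Quotient.mkₐ k (Ideal.span {(X : k[X]) ^ (M * n.factorial)})) (C t + C ε * X) N
    exact this
  simp only [h2] at h1
  rw [h3, ← map_prod, Ideal.Quotient.eq, Ideal.mem_span_singleton] at h1
  rw [← dvd_sub_right]
  · exact h1
  · have hcard : n.factorial = (Finset.univ : Finset (Equiv.Perm (Fin n))).card := by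
      rw [Finset.card_univ, Fintype.card_perm, Fintype.card_fin]
    rw [pow_mul, hcard, ← Finset.prod_const]
    exact Finset.prod_dvd_prod_of_dvd _ _ fun π _ => hΨ π

/-! ### Roots and Frobenius on a fibre -/

/-- All critical values of `f` are among `0` and `tc`; elsewhere the fibre has `n` distinct roots. -/
theorem exists_roots {k : Type*} [Field k] [IsAlgClosed k] {n : ℕ} (hn : 2 ≤ n) {yc tc t : k}
    (hn0 : (n : k) ≠ 0)
    (hder : derivative (X ^ n - X ^ (n - 1) : k[X]) = C (n : k) * X ^ (n - 2) * (X - C yc))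
    (htc : yc ^ n - yc ^ (n - 1) = tc) (ht0 : t ≠ 0) (ht : t ≠ tc) :
    ∃ η : Fin n → k, Function.Injective η ∧ RootTuple η t := by
  classical
  set P : k[X] := X ^ n - X ^ (n - 1) - C t with hP
  obtain ⟨hmon, hdeg⟩ := rootPoly_monic hn t
  rw [← hP] at hmon hdeg
  have hev : ∀ x, P.eval x = x ^ n - x ^ (n - 1) - t := by intro x; simp [hP]
  have hnd : P.roots.Nodup := by
    apply nodup_roots
    rw [separable_def, isCoprime_iff_aeval_ne_zero_of_isAlgClosed k k]
    intro x
    by_contra! h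
    obtain ⟨h1, h2⟩ := h
    rw [hP, derivative_sub, derivative_C, sub_zero, hder] at h2
    simp only [coe_aeval_eq_eval, eval_mul, eval_C, eval_pow, eval_X, eval_sub, mul_eq_zero, hn0, false_or] at h2
    rw [coe_aeval_eq_eval, hev] at h1
    rcases h2 with h2 | h2
    · have hx := eq_zero_of_pow_eq_zero h2
      rw [hx, zero_pow (by omega), zero_pow (by omega)] at h1
      apply ht0
      linear_combination -h1
    · rw [sub_eq_zero.1 h2, htc] at h1
      exact ht (sub_eq_zero.1 h1).symm
  have hcard : P.roots.toFinset.card = n := by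
    rw [Multiset.toFinset_card_of_nodup hnd, ← hdeg]
    exact (IsAlgClosed.splits P).natDegree_eq_card_roots.symm
  let E := (P.roots.toFinset.equivFinOfCardEq hcard).symm
  refine ⟨fun i => (E i : k), Subtype.val_injective.comp E.injective, ?_⟩
  refine rootTuple_of_injective hn (Subtype.val_injective.comp E.injective) fun i => ?_
  have h1 := (E i).2
  rw [Multiset.mem_toFinset, mem_roots hmon.ne_zero, IsRoot, hev] at h1
  exact sub_eq_zero.1 h1

/-- If `f - t` is reducible over `F`, the Frobenius permutation of its roots is not an `n`-cycle:
otherwise the minimal polynomial over `F` of one root would vanish at all `n` roots and equal `f - t`. -/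
theorem exists_frobenius_perm {F k : Type*} [Field F] [Fintype F] [Field k] [Algebra F k]
    {n : ℕ} (hn : 2 ≤ n) {t : F} {η : Fin n → k}
    (hη : Function.Injective η) (hroot : RootTuple η (algebraMap F k t))
    (hred : ¬ Irreducible (X ^ n - X ^ (n - 1) - C t : F[X])) :
    ∃ σ : Equiv.Perm (Fin n), σ.cycleType ≠ {n} ∧ ∀ l, η l ^ Fintype.card F = η (σ l) := by
  classical
  have hex : ∀ l, ∃ j, η l ^ Fintype.card F = η j := by
    intro l
    refine RootTuple.exists_eq hroot ?_
    have := congrArg (FiniteField.frobeniusAlgHom F k) (hroot.pow_eq l)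
    rw [map_sub, map_pow, map_pow, AlgHom.commutes, FiniteField.coe_frobeniusAlgHom] at this
    exact this
  choose s hs using hex
  have hsinj : Function.Injective s := by
    intro i j hij
    apply hη
    apply (FiniteField.frobeniusAlgHom F k).toRingHom.injective
    change η i ^ Fintype.card F = η j ^ Fintype.card F
    rw [hs, hs, hij]
  refine ⟨Equiv.ofBijective s (Finite.injective_iff_bijective.1 hsinj), fun hcyc => hred ?_, hs⟩
  set σ : Equiv.Perm (Fin n) := Equiv.ofBijective s (Finite.injective_iff_bijective.1 hsinj) with hσ
  have hσs : ∀ l, σ l = s l := fun l => rfl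
  have hcycle : σ.IsCycle := Equiv.Perm.card_cycleType_eq_one.1 (by rw [hcyc]; rfl)
  have hsupp : σ.support = Finset.univ := by
    rw [← Finset.card_eq_iff_eq_univ, ← Equiv.Perm.sum_cycleType, hcyc]; simp
  have hmem : ∀ l, σ l ≠ l := fun l => by
    rw [← Equiv.Perm.mem_support, hsupp]; exact Finset.mem_univ l
  set P : F[X] := X ^ n - X ^ (n - 1) - C t with hP
  obtain ⟨hmon, hdeg⟩ := rootPoly_monic hn t
  rw [← hP] at hmon hdeg
  have i0 : Fin n := ⟨0, by omega⟩
  have haP : aeval (η i0) P = 0 := by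
    rw [hP]
    simp [hroot.pow_eq i0]
  have h_integral : IsIntegral F (η i0) := ⟨P, hmon, haP⟩
  set m := minpoly F (η i0) with hm
  have hstep : ∀ l, aeval (η l) m = 0 → aeval (η (σ l)) m = 0 := by
    intro l hl
    have := aeval_algHom_apply (FiniteField.frobeniusAlgHom F k) (η l) m
    rw [hl, map_zero, FiniteField.coe_frobeniusAlgHom] at this
    rwa [hσs, ← hs]
  have hall : ∀ l, aeval (η l) m = 0 := by
    intro l
    obtain ⟨i, hi⟩ := (hcycle.sameCycle (hmem i0) (hmem l)).exists_nat_pow_eq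
    rw [← hi]
    clear hi
    induction i with
    | zero => exact minpoly.aeval F _
    | succ i ih => rw [pow_succ', Equiv.Perm.mul_apply]; exact hstep _ ih
  have hle : n ≤ m.natDegree := by
    have h1 : (Finset.univ.image η) ⊆ (m.aroots k).toFinset := by
      intro x hx
      obtain ⟨l, -, rfl⟩ := Finset.mem_image.1 hx
      rw [Multiset.mem_toFinset, mem_aroots]
      exact ⟨minpoly.ne_zero h_integral, hall l⟩
    have h2 := (Finset.card_le_card h1).trans (Multiset.toFinset_card_le _)
    rw [Finset.card_image_of_injective _ hη, Finset.card_univ, Fintype.card_fin] at h2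
    exact h2.trans ((card_roots' _).trans natDegree_map_le)
  have : m = P := (eq_of_monic_of_dvd_of_natDegree_le (minpoly.monic h_integral) hmon
    (minpoly.dvd F _ haP) (by rw [hdeg]; exact hle)).symm
  rw [← this]
  exact minpoly.irreducible h_integral

/-! ### Numerical estimates -/

theorem cube_le_six_factorial {n : ℕ} (hn : 2 ≤ n) : n ^ 3 ≤ 6 * n.factorial := by
  induction n, hn using Nat.le_induction with
  | base => decide
  | succ n hn ih =>
    rw [Nat.factorial_succ]
    have h1 : (n + 1) ^ 2 ≤ n ^ 3 + 1 := by nlinarith [Nat.mul_le_mul hn hn, mul_le_mul hn hn]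
    rcases Nat.lt_or_ge n 3 with h | h
    · have : n = 2 := by omega
      subst this; decide
    · have h2 : (n + 1) ^ 2 ≤ n ^ 3 := by nlinarith [Nat.mul_le_mul h h]
      nlinarith

theorem two_mul_sum_affine (M m D u : ℕ) :
    2 * ∑ j : Fin M, (m * (D + 2 * u * j) + 1) =
      2 * M * (m * D + 1) + 2 * m * u * (M * (M - 1)) := by
  rw [Fin.sum_univ_eq_sum_range (fun j => m * (D + 2 * u * j) + 1), ← Finset.sum_range_id_mul_two]
  simp only [mul_add, Finset.sum_add_distrib, Finset.sum_const, Finset.card_range,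
    Finset.mul_sum, Finset.sum_mul, smul_eq_mul]
  have : ∑ i ∈ Finset.range M, 2 * (m * (2 * u * i)) =
      ∑ i ∈ Finset.range M, 2 * m * u * (i * 2) := Finset.sum_congr rfl fun i _ => by ring
  rw [this]
  ring

set_option maxHeartbeats 1000000 in
/-- With `M = n ^ 2` as order of vanishing, the parameters `a` and `b` satisfy, in this order: the linear
system has more unknowns than equations; functions of the degree of the `s i` cannot vanish to order
`q`; the degree of the norm is less than `q - 2` zeros of order `M * n!` require; and `M ≤ q`. -/
theorem count_params {n : ℕ} (hn : 2 ≤ n) {q a b d : ℕ} (hq : (6 * n.factorial) ^ 2 ≤ q)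
    (ha : a = 36 * n.factorial - n) (hb : b = n ^ 2 - n / 2) (hd : d = n * (n - 1) / 2) :
    ((n - 1) * (n - 1).factorial) * ∑ m : Fin (n ^ 2), ((n - 1).factorial *
      (((n * (a - 1) + d) + (n * (b - 1) + d)) + 2 * n * m) + 1) <
        (n.factorial * a) * (n.factorial * b) ∧
    (n - 1).factorial * (n * (a - 1) + d) < q ∧
    (n - 1).factorial * ((n * (a - 1) + d) + (n * (b - 1) + d) * q) <
      (q - 2) * (n ^ 2 * n.factorial) ∧ n ^ 2 ≤ q := by
  have h6 := cube_le_six_factorial hn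
  have hself := Nat.self_le_factorial n
  obtain ⟨s, rfl⟩ : ∃ s, n = s + 1 := ⟨n - 1, by omega⟩
  have hs : 1 ≤ s := by omega
  rw [Nat.add_sub_cancel] at *
  have hf := Nat.factorial_succ s
  have hfpos := Nat.factorial_pos s
  generalize hN : (s + 1).factorial = N at *
  generalize hm : s.factorial = m at *
  have hd2 : 2 * d = (s + 1) * s := by
    rw [hd]; exact Nat.mul_div_cancel' (by rw [mul_comm]; exact (Nat.even_mul_succ_self s).two_dvd)
  obtain ⟨a', rfl⟩ : ∃ a', a = a' + 1 := ⟨a - 1, by omega⟩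
  have ha' : a' + 1 + (s + 1) = 36 * N := by omega
  have hsq : s + 1 ≤ (s + 1) ^ 2 := by nlinarith
  obtain ⟨b', rfl⟩ : ∃ b', b = b' + 1 := ⟨b - 1, by omega⟩
  obtain ⟨r, hr, hr1, hr2⟩ : ∃ r, b' + 1 + r = (s + 1) ^ 2 ∧ 2 * r ≤ s + 1 ∧ s ≤ 2 * r :=
    ⟨(s + 1) / 2, by omega, by omega, by omega⟩
  simp only [Nat.add_sub_cancel]
  have hn2 : (s + 1) ^ 2 - 1 = s ^ 2 + 2 * s := by
    have : (s + 1) ^ 2 = s ^ 2 + 2 * s + 1 := by ring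
    omega
  have hda : m * ((s + 1) * a' + d) < q := by
    have h1 : (s + 1) * a' + d < (s + 1) * (36 * N) := by nlinarith
    calc m * ((s + 1) * a' + d) < m * ((s + 1) * (36 * N)) := by gcongr
      _ = (6 * N) ^ 2 := by rw [hf]; ring
      _ ≤ q := hq
  have hbig : 4 * (s + 1) ^ 2 ≤ q := by
    have h1 : (s + 1) ^ 2 ≤ N ^ 2 := Nat.pow_le_pow_left hself 2
    have h2 : (6 * N) ^ 2 = 36 * N ^ 2 := by ring
    omega
  refine ⟨?_, ?_, ?_, ?_⟩
  · set D := ((s + 1) * a' + d) + ((s + 1) * b' + d) with hD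
    have hD' : D = (s + 1) * (a' + b') + (s + 1) * s := by rw [hD, ← hd2]; ring
    have hmain : s * (D + 1 + (s + 1) * (s ^ 2 + 2 * s)) < (a' + 1) * (b' + 1) := by
      have e1 : (a' + 1) * (b' + 1) + (a' + 1) * r = (a' + 1) * (s + 1) ^ 2 := by
        rw [← mul_add, hr]
      have e2 : (a' + 1) * (2 * r) ≤ (a' + 1) * (s + 1) := Nat.mul_le_mul_left _ hr1
      have e3 : (s + 1) * (a' + 1) + (s + 1) * (s + 1) = (s + 1) * (36 * N) := by
        rw [← ha']; ring
      have e4 : (s + 1) * (6 * (s + 1) ^ 3) ≤ (s + 1) * (36 * N) :=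
        Nat.mul_le_mul_left _ (by omega)
      have e5 : s * (s + 1) * (b' + 1) ≤ s * (s + 1) * (s + 1) ^ 2 :=
        Nat.mul_le_mul_left _ (by omega)
      rw [hD']
      nlinarith
    have hlast : m * D + 1 ≤ m * (D + 1) := by
      have : m * (D + 1) = m * D + m := by ring
      omega
    have hsum := two_mul_sum_affine ((s + 1) ^ 2) m D (s + 1)
    rw [hn2] at hsum
    refine lt_of_mul_lt_mul_left (a := 2) ?_ (Nat.zero_le _)
    calc 2 * (s * m * ∑ j : Fin ((s + 1) ^ 2), (m * (D + 2 * (s + 1) * j) + 1))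
        = s * m * (2 * ∑ j : Fin ((s + 1) ^ 2), (m * (D + 2 * (s + 1) * j) + 1)) := by ring
      _ = s * m * (2 * (s + 1) ^ 2 * (m * D + 1) +
            2 * m * (s + 1) * ((s + 1) ^ 2 * (s ^ 2 + 2 * s))) := by rw [hsum]
      _ ≤ s * m * (2 * (s + 1) ^ 2 * (m * (D + 1)) +
            2 * m * (s + 1) * ((s + 1) ^ 2 * (s ^ 2 + 2 * s))) := by gcongr
      _ = 2 * (s + 1) ^ 2 * m ^ 2 * (s * (D + 1 + (s + 1) * (s ^ 2 + 2 * s))) := by ring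
      _ < 2 * (s + 1) ^ 2 * m ^ 2 * ((a' + 1) * (b' + 1)) := by gcongr
      _ = 2 * (N * (a' + 1) * (N * (b' + 1))) := by rw [hf]; ring
  · exact hda
  · have hdb : (s + 1) * b' + d + (s + 1) ≤ (s + 1) * (s + 1) ^ 2 := by
      rw [← hr]; nlinarith
    have hdb2 : m * ((s + 1) * b' + d) + N ≤ N * (s + 1) ^ 2 := by
      rw [hf]
      calc _ = m * ((s + 1) * b' + d + (s + 1)) := by ring
        _ ≤ m * ((s + 1) * (s + 1) ^ 2) := Nat.mul_le_mul_left _ hdb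
        _ = _ := by ring
    have hdb3 := Nat.mul_le_mul_right q hdb2
    have hN2 : 2 ≤ N := by omega
    have hbig2 : N * (4 * (s + 1) ^ 2) ≤ N * q := Nat.mul_le_mul_left _ hbig
    have hq2 : 2 * q ≤ N * q := Nat.mul_le_mul_right _ hN2
    have h2q : 2 ≤ q := by
      have := Nat.one_le_pow 2 (s + 1) (by omega)
      omega
    have hfin : (q - 2) * ((s + 1) ^ 2 * N) + N * (2 * (s + 1) ^ 2) = N * (s + 1) ^ 2 * q := by
      obtain ⟨q', rfl⟩ : ∃ q', q = q' + 2 := ⟨q - 2, by omega⟩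
      rw [Nat.add_sub_cancel]
      ring
    have hl : m * ((s + 1) * a' + d + ((s + 1) * b' + d) * q) + N * q =
        m * ((s + 1) * a' + d) + (m * ((s + 1) * b' + d) + N) * q := by ring
    linarith
  · omega

/-! ### Irreducible members of the family -/

theorem card_not_full_cycle {n : ℕ} (hn : 2 ≤ n) :
    (Finset.univ.filter fun σ : Equiv.Perm (Fin n) => σ.cycleType ≠ {n}).card =
      (n - 1) * (n - 1).factorial := by
  have h1 := Equiv.Perm.card_of_cycleType_singleton (α := Fin n) hn (by simp)
  have h2 := Finset.card_filter_add_card_filter_not (s := (Finset.univ : Finset (Equiv.Perm (Fin n))))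
    (fun σ => σ.cycleType = {n})
  rw [h1, Finset.card_univ, Fintype.card_perm, Fintype.card_fin, Nat.choose_self, mul_one] at h2
  obtain ⟨s, rfl⟩ : ∃ s, n = s + 1 := ⟨n - 1, by omega⟩
  rw [Nat.factorial_succ, Nat.add_sub_cancel] at *
  simp only [ne_eq] at *
  have : (s + 1) * s.factorial = s * s.factorial + s.factorial := by ring
  omega

theorem stmt_9 (n : ℕ) (hn : 2 ≤ n) (F : Type*) [Field F] [Fintype F]
    (hcop : Nat.Coprime (Fintype.card F) (n * (n - 1)))
    (hq : (6 * n.factorial) ^ 2 ≤ Fintype.card F) :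
    ∃ t : F, Irreducible (X ^ n - X ^ (n - 1) - C t) := by
  classical
  by_contra! hred
  obtain ⟨p, hpchar⟩ := CharP.exists F
  obtain ⟨e, hp, hcard⟩ := FiniteField.card F p
  have : Fact p.Prime := ⟨hp⟩
  set k := AlgebraicClosure F
  have : CharP k p := charP_of_injective_algebraMap (algebraMap F k).injective p
  -- the characteristic divides none of `n`, `n - 1`, `2`
  have hne : ∀ d : ℕ, d ∣ n * (n - 1) → (d : k) ≠ 0 := by
    intro d hd h0
    rw [CharP.cast_eq_zero_iff k p] at h0
    have hpq : p ∣ Fintype.card F := by rw [hcard]; exact dvd_pow_self p e.ne_zero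
    have := Nat.dvd_gcd hpq (h0.trans hd)
    rw [hcop] at this
    exact hp.one_lt.ne' (Nat.dvd_one.1 this)
  have hn0 := hne n (dvd_mul_right _ _)
  have hn1 := hne (n - 1) (dvd_mul_left _ _)
  have h2 : (2 : k) ≠ 0 := by
    have := hne 2 (by
      obtain ⟨s, rfl⟩ : ∃ s, n = s + 1 := ⟨n - 1, by omega⟩
      rw [mul_comm]; exact (Nat.even_mul_succ_self s).two_dvd)
    exact_mod_cast this
  obtain ⟨yc, tc, g, hyc, htc, hder, hfg, hg⟩ := exists_critical (k := k) hn hn0 hn1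
  obtain ⟨y, u, v, hbase⟩ := exists_basePoint hn h2 hn0 htc hder hfg hg
  have htcv : yc ^ n - yc ^ (n - 1) = tc := by
    have := congrArg (eval yc) hfg
    simp at this
    exact sub_eq_zero.1 this
  set f : k[X] := X ^ n - X ^ (n - 1) with hf
  -- `f ^ 2 * (f - tc)` is divisible by the square of the derivative of `f`, so a root over `t` can
  -- be deformed polynomially with speed `ε = t ^ 2 * (t - tc)`, nonzero off the branch values
  set G : k[X] := C ((n : k)⁻¹ ^ 2) * (X ^ 2 * (X - C 1) ^ 2 * g) with hG
  have hfac : f = X ^ (n - 2) * (X * (X - C 1)) := by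
    obtain ⟨s, rfl⟩ : ∃ s, n = s + 2 := ⟨n - 2, by omega⟩
    rw [hf, Nat.add_sub_cancel, show s + 2 - 1 = s + 1 by omega, C_1]
    ring
  have hGe : derivative f ^ 2 * G = f ^ 2 * (f - C tc) := by
    rw [hder, hfg, hG]
    have hC : C (n : k) ^ 2 * C ((n : k)⁻¹ ^ 2) = 1 := by
      rw [← C_pow, ← C_mul, ← mul_pow, mul_inv_cancel₀ hn0, one_pow, C_1]
    rw [hfac]
    linear_combination (X ^ (n - 2)) ^ 2 * (X - C yc) ^ 2 * (X ^ 2 * (X - C 1) ^ 2 * g) * hC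
  have hfdeg : f.natDegree ≤ n := by
    rw [hf]
    exact (natDegree_sub_le _ _).trans (by simp)
  have hGdeg : G.natDegree ≤ n + 2 := by
    have hg0 : g ≠ 0 := by rintro rfl; simp at hg
    have h1 := congrArg natDegree hfg
    rw [hf, (rootPoly_monic hn tc).2, natDegree_mul (pow_ne_zero _ (X_sub_C_ne_zero _)) hg0,
      natDegree_pow, natDegree_X_sub_C] at h1
    refine (natDegree_C_mul_le _ _).trans (natDegree_mul_le.trans ?_)
    have h3 : (X ^ 2 * (X - C 1) ^ 2 : k[X]).natDegree ≤ 4 := by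
      refine natDegree_mul_le.trans ?_
      rw [natDegree_pow, natDegree_pow, natDegree_X, natDegree_X_sub_C]
    omega
  obtain ⟨a, ha⟩ : ∃ a, a = 36 * n.factorial - n := ⟨_, rfl⟩
  obtain ⟨b, hb⟩ : ∃ b, b = n ^ 2 - n / 2 := ⟨_, rfl⟩
  obtain ⟨hcount, hda, hfinal, hMq⟩ := count_params hn hq ha hb rfl
  obtain ⟨θ, hθ0, hθw, hθ⟩ := exists_flow hn f G _ hfdeg hGdeg hGe (n ^ 2 * n.factorial)
  set A := Finset.univ.filter fun σ : Equiv.Perm (Fin n) => σ.cycleType ≠ {n} with hA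
  rw [← card_not_full_cycle hn, ← hA] at hcount
  obtain ⟨c, hc0, hc⟩ := hbase.exists_coefficients hn hθw a b (n ^ 2) A _ le_rfl hcount
  rw [hcard] at hda hMq
  have hΨ0 := hbase.aux_ne_zero hn hda c hc0
  set Ψ : MvPolynomial (Fin n) k := ∑ ij : StairIdx n a × StairIdx n b,
    c ij • (stairMon k ij.1 * stairMon k ij.2 ^ (p ^ (e : ℕ))) with hΨ
  have hΨdeg : Ψ.totalDegree ≤ (n * (a - 1) + n * (n - 1) / 2) +
      (n * (b - 1) + n * (n - 1) / 2) * Fintype.card F := by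
    refine (isDegreeFn_totalDegree _ _).sum _ _ fun ij _ => ?_
    refine (MvPolynomial.totalDegree_smul_le _ _).trans ((MvPolynomial.totalDegree_mul _ _).trans ?_)
    refine add_le_add (totalDegree_stairMon k ij.1) ((MvPolynomial.totalDegree_pow _ _).trans ?_)
    rw [hcard, mul_comm]
    exact Nat.mul_le_mul_right _ (totalDegree_stairMon k ij.2)
  obtain ⟨N, hNdeg, hN⟩ := exists_norm hn Ψ hΨdeg
  have hN0 : N ≠ 0 := by
    rintro rfl
    have h1 := hN _ _ _ hbase.root
    rw [map_zero, Finset.prod_eq_zero_iff] at h1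
    obtain ⟨π, -, hπ⟩ := h1
    exact hΨ0 ((hbase.aeval_comp_eq_zero_iff hn π Ψ).1 hπ)
  -- the unbranched values; at least `q - 2` of them
  set T : Finset F := Finset.univ.filter fun t => t ≠ 0 ∧ algebraMap F k t ≠ tc with hT
  have hmult : ∀ t ∈ T, (X - C (algebraMap F k t)) ^ (n ^ 2 * n.factorial) ∣ N := by
    intro t ht
    obtain ⟨-, ht0, httc⟩ := Finset.mem_filter.1 ht
    have ht0' : algebraMap F k t ≠ 0 := by rwa [Ne, map_eq_zero]
    obtain ⟨η, hη, hroot⟩ := exists_roots hn hn0 hder htcv ht0' httc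
    obtain ⟨σ, hσ, hσq⟩ := exists_frobenius_perm hn hη hroot (hred t)
    have hfη : ∀ l, f.eval (η l) = algebraMap F k t := fun l => by
      rw [hf, ← hroot.pow_eq l]; simp
    refine multiplicity_norm hn (by positivity) hθ0 hθ hη hroot
      (ε := algebraMap F k t ^ 2 * (algebraMap F k t - tc)) (fun l => ?_)
      (mul_ne_zero (pow_ne_zero _ ht0') (sub_ne_zero.2 httc)) (fun w τ => hN _ w τ) fun π => ?_
    · rw [eval_mul, eval_pow, hfη, eval_sub (p := f), hfη, eval_C]
    · have hrootπ : RootTuple (η ∘ π) (algebraMap F k t) := by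
        rw [RootTuple, ← hroot]
        exact Equiv.prod_comp π fun i => X - C (η i)
      -- reordering the roots by `π` conjugates their Frobenius permutation, which preserves `A`
      refine X_pow_dvd_aeval_flow (η := η ∘ π) (σ := π⁻¹ * σ * π) hθ0 c (fun l => ?_) hMq
        fun m hm => ?_
      · simp [← hcard, hσq]
      · refine hbase.aeval_eq_zero hn _ (hc _ ?_ m hm) hrootπ
        rw [hA, Finset.mem_filter]
        refine ⟨Finset.mem_univ _, ?_⟩
        have := Equiv.Perm.cycleType_conj (σ := σ) (τ := π⁻¹)
        rw [inv_inv] at this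
        rwa [this]
  have hprod : ∏ t ∈ T, (X - C (algebraMap F k t)) ^ (n ^ 2 * n.factorial) ∣ N := by
    refine Finset.prod_dvd_of_coprime (fun s _ t _ hst => ?_) hmult
    apply IsCoprime.pow
    exact isCoprime_X_sub_C_of_isUnit_sub
      (sub_ne_zero.2 fun h => hst ((algebraMap F k).injective h)).isUnit
  have hTcard : Fintype.card F - 2 ≤ T.card := by
    have h1 : (Finset.univ \ T).card ≤ 2 := by
      have : Finset.univ \ T ⊆ {0} ∪ Finset.univ.filter fun t => algebraMap F k t = tc := by
        intro t ht
        simp [hT] at ht ⊢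
        tauto
      refine (Finset.card_le_card this).trans ((Finset.card_union_le _ _).trans ?_)
      have : (Finset.univ.filter fun t => algebraMap F k t = tc).card ≤ 1 := by
        rw [Finset.card_le_one]
        intro s hs t ht
        apply (algebraMap F k).injective
        rw [(Finset.mem_filter.1 hs).2, (Finset.mem_filter.1 ht).2]
      rw [Finset.card_singleton]
      omega
    rw [Finset.card_sdiff_of_subset (Finset.subset_univ _), Finset.card_univ] at h1
    omega
  have hle := natDegree_le_of_dvd hprod hN0
  rw [natDegree_prod_of_monic _ _ fun t _ => (monic_X_sub_C _).pow _] at hle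
  simp only [natDegree_pow, natDegree_X_sub_C, Finset.sum_const, smul_eq_mul, mul_one] at hle
  have := Nat.mul_le_mul_right (n ^ 2 * n.factorial) hTcard
  omega
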